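/- arXiv:math/0602148 — 3 statements merged into one kernel-verified Lean document; each statement's English description precedes it below -/
import Mathlib

section
/- For every n ≥ 3, the group K_n is not finitely presentable: there is no group isomorphism between K_n and a presented group on a finite generating set with a finite set of relators. -/
open FreeGroup

/-- The free group on `n` generators. -/
abbrev FG (n : ℕ) : Type := FreeGroup (Fin n)

/-- The pure symmetric automorphism group `PΣ_n`: automorphisms sending each
generator to a conjugate of itself. -/
def PSigmaAut (n : ℕ) : Subgroup (MulAut (FG n)) where
  carrier := {φ | ∀ i : Fin n, ∃ w : FG n, φ (of i) = w * of i * w⁻¹}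
  one_mem' := fun i => ⟨1, by simp⟩
  mul_mem' := by
    rintro φ ψ hφ hψ i
    obtain ⟨w, hw⟩ := hψ i
    obtain ⟨v, hv⟩ := hφ i
    refine ⟨φ w * v, ?_⟩
    simp only [MulAut.mul_apply, hw, _root_.map_mul, _root_.map_inv, hv, mul_inv_rev, mul_assoc]
  inv_mem' := by
    intro φ hφ i
    obtain ⟨w, hw⟩ := hφ i
    refine ⟨(φ⁻¹ w)⁻¹, ?_⟩
    refine φ.injective ?_
    simp only [MulAut.apply_inv_self, _root_.map_mul, _root_.map_inv, inv_inv, hw]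
    group

/-- The projection `F_n → F_{n-1}` sending `x_n ↦ 1` and `x_i ↦ x_i` for `i < n-1`. -/
def projHom (n : ℕ) : FG n →* FG (n - 1) :=
  FreeGroup.lift fun i => if h : (i : ℕ) < n - 1 then of (⟨i, h⟩ : Fin (n - 1)) else 1

/-- The inclusion `F_{n-1} → F_n`. -/
def castHom (n : ℕ) : FG (n - 1) →* FG n :=
  FreeGroup.lift fun i => of (Fin.castLE (Nat.sub_le n 1) i)

/-- The endomorphism of `F_{n-1}` induced by an automorphism of `F_n`. -/
def desc (n : ℕ) (φ : MulAut (FG n)) : FG (n - 1) →* FG (n - 1) :=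
  (projHom n).comp ((φ : FG n ≃* FG n).toMonoidHom.comp (castHom n))

lemma desc_proj {n : ℕ} {φ : MulAut (FG n)} (hφ : φ ∈ PSigmaAut n) (x : FG n) :
    desc n φ (projHom n x) = projHom n (φ x) := by
  have : (desc n φ).comp (projHom n) = (projHom n).comp (φ : FG n ≃* FG n).toMonoidHom := by
    apply FreeGroup.ext_hom
    intro i
    by_cases h : (i : ℕ) < n - 1
    · simp only [MonoidHom.comp_apply, projHom, FreeGroup.lift_apply_of, dif_pos h]
      simp only [desc, MonoidHom.comp_apply, castHom, FreeGroup.lift_apply_of]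
      congr 2
    · obtain ⟨w, hw⟩ := hφ i
      simp only [MonoidHom.comp_apply, projHom, FreeGroup.lift_apply_of, dif_neg h,
        MulEquiv.coe_toMonoidHom, hw, _root_.map_mul, _root_.map_inv, _root_.map_one]
      simp
  exact DFunLike.congr_fun this x

lemma desc_mul {n : ℕ} {φ : MulAut (FG n)} (hφ : φ ∈ PSigmaAut n) (ψ : MulAut (FG n)) :
    desc n (φ * ψ) = (desc n φ).comp (desc n ψ) := by
  apply FreeGroup.ext_hom
  intro i
  simp only [desc, MonoidHom.comp_apply, MulEquiv.coe_toMonoidHom, MulAut.mul_apply]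
  exact (desc_proj hφ _).symm

lemma desc_one (n : ℕ) : desc n 1 = MonoidHom.id (FG (n - 1)) := by
  apply FreeGroup.ext_hom
  intro i
  simp only [desc, MonoidHom.comp_apply, MulEquiv.coe_toMonoidHom, MulAut.one_apply,
    castHom, FreeGroup.lift_apply_of, projHom, MonoidHom.id_apply]
  rw [dif_pos (show ((Fin.castLE (Nat.sub_le n 1) i : Fin n) : ℕ) < n - 1 from i.isLt)]
  exact congrArg of (Fin.ext rfl)

/-- The automorphism of `F_{n-1}` induced by an element of `PΣ_n`. -/
def descAut (n : ℕ) (φ : PSigmaAut n) : MulAut (FG (n - 1)) :=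
  MonoidHom.toMulEquiv (desc n ↑φ) (desc n ↑(φ⁻¹))
    (by
      rw [← desc_mul (φ⁻¹).2 ↑φ]
      norm_num [desc_one])
    (by
      rw [← desc_mul φ.2 ↑(φ⁻¹)]
      norm_num [desc_one])

lemma descAut_mem (n : ℕ) (φ : PSigmaAut n) : descAut n φ ∈ PSigmaAut (n - 1) := by
  intro i
  obtain ⟨w, hw⟩ := φ.2 (Fin.castLE (Nat.sub_le n 1) i)
  refine ⟨projHom n w, ?_⟩
  have : descAut n φ (of i) = projHom n ((φ : MulAut (FG n)) (of (Fin.castLE (Nat.sub_le n 1) i))) := by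
    simp only [descAut, MonoidHom.toMulEquiv, MulEquiv.coe_mk, Equiv.coe_fn_mk, desc,
      MonoidHom.comp_apply, MulEquiv.coe_toMonoidHom, castHom, FreeGroup.lift_apply_of]
  rw [this, hw]
  simp only [_root_.map_mul, _root_.map_inv, projHom, FreeGroup.lift_apply_of]
  rw [dif_pos (show ((Fin.castLE (Nat.sub_le n 1) i : Fin n) : ℕ) < n - 1 from i.isLt)]
  congr 2

/-- The homomorphism `π_n : PΣ_n → PΣ_{n-1}` induced by killing the last generator. -/
def piHom (n : ℕ) : PSigmaAut n →* PSigmaAut (n - 1) :=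
  MonoidHom.mk' (fun φ => ⟨descAut n φ, descAut_mem n φ⟩)
    (by
      intro φ ψ
      refine Subtype.ext (MulEquiv.ext fun x => ?_)
      show desc n ↑(φ * ψ) x = (descAut n φ * descAut n ψ) x
      rw [MulAut.mul_apply]
      show _ = desc n ↑φ (desc n ↑ψ x)
      rw [Subgroup.coe_mul, desc_mul φ.2]
      rfl)

/-- The kernel `K_n` of `π_n : PΣ_n → PΣ_{n-1}`. -/
def Kn (n : ℕ) : Subgroup (PSigmaAut n) := (piHom n).ker

/-- The monoid hom underlying `α_{ij}`: sends `x_i ↦ x_j x_i x_j⁻¹` and fixes the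
other generators. -/
def alphaHom (n : ℕ) (i j : Fin n) : FG n →* FG n :=
  FreeGroup.lift fun r => if r = i then of j * of i * (of j)⁻¹ else of r

/-- The inverse of `alphaHom`. -/
def alphaInvHom (n : ℕ) (i j : Fin n) : FG n →* FG n :=
  FreeGroup.lift fun r => if r = i then (of j)⁻¹ * of i * of j else of r

/-- The McCool generator `α_{ij} ∈ Aut(F_n)`, sending `x_i ↦ x_j x_i x_j⁻¹` and fixing
the other generators (defined to be the identity if `i = j`). -/
def alphaAut (n : ℕ) (i j : Fin n) : MulAut (FG n) :=
  if h : i = j then 1 else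
    MonoidHom.toMulEquiv (alphaHom n i j) (alphaInvHom n i j)
      (by
        apply FreeGroup.ext_hom
        intro r
        by_cases hr : r = i
        · subst hr
          simp [alphaHom, alphaInvHom, Ne.symm h, mul_assoc]
        · simp [alphaHom, alphaInvHom, hr])
      (by
        apply FreeGroup.ext_hom
        intro r
        by_cases hr : r = i
        · subst hr
          simp [alphaHom, alphaInvHom, Ne.symm h, mul_assoc]
        · simp [alphaHom, alphaInvHom, hr])

lemma alphaAut_apply_of (n : ℕ) {i j : Fin n} (hij : i ≠ j) (r : Fin n) :
    alphaAut n i j (of r) = if r = i then of j * of i * (of j)⁻¹ else of r := by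
  simp only [alphaAut, dif_neg hij]
  show alphaHom n i j (of r) = _
  simp [alphaHom]

lemma alphaAut_mem (n : ℕ) (i j : Fin n) : alphaAut n i j ∈ PSigmaAut n := by
  by_cases h : i = j
  · simp only [alphaAut, dif_pos h]
    exact (PSigmaAut n).one_mem
  · intro r
    rw [alphaAut_apply_of n h r]
    by_cases hr : r = i
    · subst hr
      exact ⟨of j, by simp⟩
    · exact ⟨1, by simp [hr]⟩

/-- `α_{ij}` as an element of `PΣ_n`. -/
def alphaP (n : ℕ) (i j : Fin n) : PSigmaAut n := ⟨alphaAut n i j, alphaAut_mem n i j⟩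

open scoped commutatorElement

/-!
Let `t ≠ 1` be a unit of a domain `R` and let `F_n` act on the affine line over `R`: the last
generator `x_l` is the unit translation, some `x_j` is multiplication by `t`, and the other
generators act trivially. Every `φ ∈ PΣ_n` changes this representation `ε_t` by conjugation with a
unique affine map `μ_t(φ)`. If `x_i` acts trivially and `φ(x_i) = w x_i w⁻¹`, then
`ν_t(φ) = ε_t(w)⁻¹ μ_t(φ)` is also a homomorphism. On `K_n` the slopes of `ν_{t⁻¹}` and `μ_t` are
inverse to each other, so `(ν_{t⁻¹}, μ_t)` takes values in the quotient of P. Hall's group of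
`3 × 3` matrices by its central subgroup of corner entries, a copy of the additive group of `R`.

If `K_n` were finitely presentable, then the commutators of lifts of commuting elements of `K_n`
would all lie in one finitely generated subgroup of `R`, since lifting the generators to Hall's
group sends the finitely many relators to finitely many corner entries. But `α_{il}` commutes with
conjugation by `x_j^k x_l x_j^{-k}`, and their lifts have commutator `-t^k`. Hence all powers of `t`
lie in a finitely generated additive group and `t` is integral over `ℤ`, which fails for
`t = 1/2 ∈ ℚ`.
-/

section CentralExtension

variable {A E K Q : Type*} [Group A] [Group E] [Group K] [Group Q]

theorem commutatorElement_eq_of_map_eq {p : E →* Q} (hp : p.ker ≤ Subgroup.center E)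
    {g g' h h' : E} (hg : p g = p g') (hh : p h = p h') : ⁅g, h⁆ = ⁅g', h'⁆ := by
  have replace_left : ∀ {a a' : E} (b : E), p a = p a' → ⁅a, b⁆ = ⁅a', b⁆ := by
    intro a a' b hab
    obtain ⟨z, hz, rfl⟩ : ∃ z ∈ Subgroup.center E, a = a' * z :=
      ⟨a'⁻¹ * a, hp (by simp [MonoidHom.mem_ker, hab]), by group⟩
    rw [commutatorElement_mul_left_eq_conj_mul,
      commutatorElement_eq_one_iff_mul_comm.mpr (Subgroup.mem_center_iff.mp hz b).symm]
    simp
  calc ⁅g, h⁆ = ⁅g', h⁆ := replace_left h hg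
    _ = ⁅h, g'⁆⁻¹ := (commutatorElement_inv h g').symm
    _ = ⁅h', g'⁆⁻¹ := by rw [replace_left g' hh]
    _ = ⁅g', h'⁆ := commutatorElement_inv h' g'

/-- Conjugation is trivial on the central subgroup `ι.range`, so the images of normal generators
already generate. -/
theorem exists_fg_map_ker_le {F : Type*} [Group F] {κ : F →* K}
    (hκ : κ.ker.IsFinitelyNormallyGenerated) (lift : F →* E) {ι : A →* E}
    (hι : ι.range ≤ Subgroup.center E) (hlift : κ.ker.map lift ≤ ι.range) :
    ∃ Z : Subgroup A, Z.FG ∧ κ.ker.map lift ≤ Z.map ι := by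
  obtain ⟨S, hS, hSκ⟩ := hκ
  have hS_range : ∀ r : S, ∃ a, ι a = lift r := fun r =>
    hlift ⟨r, hSκ ▸ Subgroup.subset_normalClosure r.2, rfl⟩
  choose a ha using hS_range
  have := hS.to_subtype
  refine ⟨Subgroup.closure (Set.range a), Subgroup.fg_iff _ |>.mpr ⟨_, rfl, Set.finite_range a⟩, ?_⟩
  have : ((Subgroup.closure (Set.range a)).map ι).Normal :=
    ⟨fun z hz g => by
      rwa [Subgroup.mem_center_iff.mp (hι (Subgroup.map_le_range _ _ hz)) g, mul_inv_cancel_right]⟩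
  rw [← hSκ, Subgroup.map_le_iff_le_comap]
  refine Subgroup.normalClosure_le_normal fun r hr => ?_
  exact ⟨a ⟨r, hr⟩, Subgroup.subset_closure (Set.mem_range_self _), ha ⟨r, hr⟩⟩

theorem exists_fg_commutatorElement_mem {α : Type*} {κ : FreeGroup α →* K}
    (hκ_surj : Function.Surjective κ) (hκ_ker : κ.ker.IsFinitelyNormallyGenerated)
    {ι : A →* E} {p : E →* Q} (hι : ι.range ≤ Subgroup.center E) (hp : p.ker = ι.range)
    {f : K →* Q} (hf : f.range ≤ p.range) :
    ∃ Z : Subgroup A, Z.FG ∧ ∀ x y : K, Commute x y →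
      ∀ g h : E, p g = f x → p h = f y → ⁅g, h⁆ ∈ Z.map ι := by
  choose lift hlift using fun a => hf ⟨κ (of a), rfl⟩
  have p_lift : ∀ u, p (FreeGroup.lift lift u) = f (κ u) :=
    DFunLike.congr_fun (f := p.comp (FreeGroup.lift lift)) (g := f.comp κ)
      (FreeGroup.ext_hom _ _ fun a => by simp [hlift])
  obtain ⟨Z, hZ, hle⟩ := exists_fg_map_ker_le hκ_ker (FreeGroup.lift lift) hι <| by
    rintro _ ⟨u, hu, rfl⟩
    rw [← hp, MonoidHom.mem_ker, p_lift, hu, _root_.map_one]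
  refine ⟨Z, hZ, fun x y hxy g h hg hh => ?_⟩
  obtain ⟨u, rfl⟩ := hκ_surj x
  obtain ⟨v, rfl⟩ := hκ_surj y
  rw [commutatorElement_eq_of_map_eq (hp.trans_le hι) (hg.trans (p_lift u).symm)
    (hh.trans (p_lift v).symm), ← map_commutatorElement]
  refine hle ⟨⁅u, v⁆, ?_, rfl⟩
  rw [SetLike.mem_coe, MonoidHom.mem_ker, map_commutatorElement,
    commutatorElement_eq_one_iff_commute]
  exact hxy

end CentralExtension

section CentralizerOfGenerator

variable {ι G : Type*} [Group G]

/-- The set `F ⧸ ⟨x_i⟩` of left cosets of the cyclic subgroup generated by `x_i`. -/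
abbrev GeneratorCosets (i : ι) : Type _ := FreeGroup ι ⧸ Subgroup.zpowers (of i)

/-- The coset of `1`, which is the only point of `F ⧸ ⟨x_i⟩` that `branchedAction` treats
specially. -/
def baseCoset (i : ι) : GeneratorCosets i := QuotientGroup.mk 1

theorem smul_baseCoset_eq_iff {i : ι} {v : FreeGroup ι} :
    v • baseCoset i = baseCoset i ↔ v ∈ Subgroup.zpowers (of i) := by
  rw [baseCoset, MulAction.Quotient.smul_mk, eq_comm, QuotientGroup.eq]
  simp

/-- The action of the free group `F` on two copies of `F ⧸ ⟨x_i⟩` which lifts left translation: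
`x_i` exchanges the two copies of the base coset, and apart from that every generator preserves
each copy. -/
noncomputable def branchedAction (i : ι) :
    FreeGroup ι →* Equiv.Perm (GeneratorCosets i × Bool) :=
  open scoped Classical in
  FreeGroup.lift fun j => (MulAction.toPerm (of j)).prodCongr (Equiv.refl Bool) *
    if j = i then Equiv.swap (baseCoset i, false) (baseCoset i, true) else 1

variable {i : ι}

theorem branchedAction_self_baseCoset :
    branchedAction i (of i) (baseCoset i, false) = (baseCoset i, true) := by
  simp [branchedAction, smul_baseCoset_eq_iff]

theorem branchedAction_self_of_ne {q : GeneratorCosets i × Bool} (hq : q.1 ≠ baseCoset i) :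
    branchedAction i (of i) q = (of i • q.1, q.2) := by
  have hswap : Equiv.swap (baseCoset i, false) (baseCoset i, true) q = q :=
    Equiv.swap_apply_of_ne_of_ne (by rintro rfl; exact hq rfl) (by rintro rfl; exact hq rfl)
  simp [branchedAction, hswap, Prod.map]

theorem fst_branchedAction (v : FreeGroup ι) (q : GeneratorCosets i × Bool) :
    (branchedAction i v q).1 = v • q.1 := by
  induction v generalizing q with
  | C1 => simp
  | of j =>
    have hswap : (Equiv.swap (baseCoset i, false) (baseCoset i, true) q).1 = q.1 := by
      rw [Equiv.swap_apply_def]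
      split_ifs <;> simp_all
    by_cases hj : j = i <;> simp [branchedAction, hj, hswap]
  | inv_of j ih =>
    rw [_root_.map_inv, eq_inv_smul_iff, ← ih, ← Equiv.Perm.mul_apply, mul_inv_cancel,
      Equiv.Perm.one_apply]
  | mul x y hx hy => rw [_root_.map_mul, Equiv.Perm.mul_apply, hx, hy, mul_smul]

/-- `x_i` exchanges the two copies of the base coset but fixes both copies of every other coset that
it fixes, so nothing that commutes with `x_i` moves the base coset. -/
theorem mem_zpowers_of_commute_of {v : FreeGroup ι} (hv : Commute v (of i)) :
    v ∈ Subgroup.zpowers (of i) := by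
  by_contra hmem
  have v_moves_base : v • baseCoset i ≠ baseCoset i := mt smul_baseCoset_eq_iff.mp hmem
  have copies_agree : branchedAction i v (baseCoset i, true) =
      branchedAction i v (baseCoset i, false) :=
    calc branchedAction i v (baseCoset i, true)
        = branchedAction i v (branchedAction i (of i) (baseCoset i, false)) := by
          rw [branchedAction_self_baseCoset]
      _ = branchedAction i (of i) (branchedAction i v (baseCoset i, false)) := by
          rw [← Equiv.Perm.mul_apply, ← _root_.map_mul, hv.eq, _root_.map_mul, Equiv.Perm.mul_apply]
      _ = (of i • v • baseCoset i, (branchedAction i v (baseCoset i, false)).2) := by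
          rw [branchedAction_self_of_ne (by rwa [fst_branchedAction]), fst_branchedAction]
      _ = (v • baseCoset i, (branchedAction i v (baseCoset i, false)).2) := by
          rw [← mul_smul, ← hv.eq, mul_smul,
            smul_baseCoset_eq_iff.mpr (Subgroup.mem_zpowers (of i))]
      _ = branchedAction i v (baseCoset i, false) :=
          Prod.ext (fst_branchedAction v (baseCoset i, false)).symm rfl
  simpa using (branchedAction i v).injective copies_agree

theorem commute_of_conj_of_eq {v w : FreeGroup ι}
    (h : v * of i * v⁻¹ = w * of i * w⁻¹) : Commute (w⁻¹ * v) (of i) := by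
  rw [commute_iff_eq, mul_assoc, mul_inv_eq_iff_eq_mul.mp h]
  group

theorem map_eq_of_conj_of_eq {v w : FreeGroup ι}
    (h : v * of i * v⁻¹ = w * of i * w⁻¹) {e : FreeGroup ι →* G} (he : e (of i) = 1) :
    e v = e w := by
  obtain ⟨m, hm⟩ := mem_zpowers_of_commute_of (commute_of_conj_of_eq h)
  have : e (w⁻¹ * v) = 1 := by rw [← hm]; simp [he]
  rwa [_root_.map_mul, _root_.map_inv, inv_mul_eq_one, eq_comm] at this

end CentralizerOfGenerator

section ConjEquivariant

variable {n : ℕ} {G : Type*} [Group G]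

/-- A homomorphism `e` out of the free group is conjugation-equivariant if every `φ ∈ PΣ_n` acts on
it as conjugation by a unique element of the target, that is `e ∘ φ = g e g⁻¹`. -/
def IsConjEquivariant (e : FG n →* G) : Prop :=
  ∀ φ : PSigmaAut n, ∃! g : G, ∀ x, e ((φ : MulAut (FG n)) x) = g * e x * g⁻¹

/-- A choice of `w` with `φ(x_i) = w x_i w⁻¹`; it is unique only up to right multiplication by
powers of `x_i`. -/
noncomputable def conjugator (φ : PSigmaAut n) (i : Fin n) : FG n := (φ.2 i).choose

theorem apply_of_eq_conjugator (φ : PSigmaAut n) (i : Fin n) :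
    (φ : MulAut (FG n)) (of i) = conjugator φ i * of i * (conjugator φ i)⁻¹ :=
  (φ.2 i).choose_spec

theorem map_conjugator_eq {φ : PSigmaAut n} {i : Fin n} {w : FG n}
    (h : (φ : MulAut (FG n)) (of i) = w * of i * w⁻¹) {e : FG n →* G} (hi : e (of i) = 1) :
    e (conjugator φ i) = e w :=
  map_eq_of_conj_of_eq ((apply_of_eq_conjugator φ i).symm.trans h) hi

theorem mul_apply_of_eq_conj (φ ψ : PSigmaAut n) (i : Fin n) :
    ((φ * ψ : PSigmaAut n) : MulAut (FG n)) (of i) =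
      ((φ : MulAut (FG n)) (conjugator ψ i) * conjugator φ i) * of i *
        ((φ : MulAut (FG n)) (conjugator ψ i) * conjugator φ i)⁻¹ := by
  simp only [Subgroup.coe_mul, MulAut.mul_apply, apply_of_eq_conjugator ψ, _root_.map_mul,
    _root_.map_inv, apply_of_eq_conjugator φ]
  group

namespace IsConjEquivariant

variable {e : FG n →* G}

/-- The element by which `φ ∈ PΣ_n` acts on `e`, as a homomorphism in `φ`. -/
noncomputable def conjHom (he : IsConjEquivariant e) : PSigmaAut n →* G :=
  MonoidHom.mk' (fun φ => (he φ).choose) fun φ ψ => by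
    refine (he (φ * ψ)).unique (he (φ * ψ)).choose_spec.1 fun x => ?_
    rw [Subgroup.coe_mul, MulAut.mul_apply, (he φ).choose_spec.1, (he ψ).choose_spec.1]
    group

theorem map_apply (he : IsConjEquivariant e) (φ : PSigmaAut n) (x : FG n) :
    e ((φ : MulAut (FG n)) x) = he.conjHom φ * e x * (he.conjHom φ)⁻¹ :=
  (he φ).choose_spec.1 x

theorem conjHom_eq (he : IsConjEquivariant e) {φ : PSigmaAut n} {g : G}
    (hg : ∀ x, e ((φ : MulAut (FG n)) x) = g * e x * g⁻¹) : he.conjHom φ = g :=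
  (he φ).unique (he.map_apply φ) hg

/-- The element by which `φ` acts on `e` after `φ` has been composed with the inner automorphism
that makes it fix `x_i`. It does not depend on that choice because `x_i` is killed by `e`. -/
noncomputable def conjHomAt (he : IsConjEquivariant e) {i : Fin n} (hi : e (of i) = 1) :
    PSigmaAut n →* G :=
  MonoidHom.mk' (fun φ => (e (conjugator φ i))⁻¹ * he.conjHom φ) fun φ ψ => by
    rw [map_conjugator_eq (mul_apply_of_eq_conj φ ψ i) hi, _root_.map_mul, _root_.map_mul,
      he.map_apply]
    group

theorem conjHomAt_apply (he : IsConjEquivariant e) {i : Fin n} (hi : e (of i) = 1)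
    (φ : PSigmaAut n) : he.conjHomAt hi φ = (e (conjugator φ i))⁻¹ * he.conjHom φ :=
  rfl

end IsConjEquivariant

end ConjEquivariant

section Kernel

variable {n : ℕ} {φ : PSigmaAut n}

theorem projHom_castHom (x : FG (n - 1)) : projHom n (castHom n x) = x :=
  DFunLike.congr_fun (f := desc n 1) (desc_one n) x

theorem piHom_apply_projHom (φ : PSigmaAut n) (x : FG n) :
    (piHom n φ : MulAut (FG (n - 1))) (projHom n x) = projHom n ((φ : MulAut (FG n)) x) :=
  desc_proj φ.2 x

theorem mem_Kn_iff :
    φ ∈ Kn n ↔ ∀ x : FG n, projHom n ((φ : MulAut (FG n)) x) = projHom n x := by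
  simp only [← piHom_apply_projHom]
  refine ⟨fun hφ x => ?_, fun h => ?_⟩
  · rw [MonoidHom.mem_ker.mp hφ]; rfl
  · refine Subtype.ext (MulEquiv.ext fun y => ?_)
    simpa [projHom_castHom] using h (castHom n y)

theorem mem_Kn_of_forall_of
    (h : ∀ i, projHom n ((φ : MulAut (FG n)) (of i)) = projHom n (of i)) : φ ∈ Kn n :=
  mem_Kn_iff.mpr <| DFunLike.congr_fun
    (f := (projHom n).comp (φ : MulAut (FG n)).toMonoidHom) (FreeGroup.ext_hom _ _ h)

variable {i l : Fin n}

theorem projHom_of_last (hl : (l : ℕ) = n - 1) : projHom n (of l) = 1 := by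
  simp [projHom, hl]

theorem castHom_projHom_of (hi : (i : ℕ) < n - 1) : castHom n (projHom n (of i)) = of i := by
  simp [projHom, castHom, hi]

theorem map_castHom_projHom {G : Type*} [Group G] {e : FG n →* G} (hl : (l : ℕ) = n - 1)
    (he : e (of l) = 1) (x : FG n) : e (castHom n (projHom n x)) = e x := by
  refine DFunLike.congr_fun (f := e.comp ((castHom n).comp (projHom n)))
    (FreeGroup.ext_hom _ _ fun j => ?_) x
  obtain hj | hj : (j : ℕ) < n - 1 ∨ (j : ℕ) = n - 1 := by omega
  · simp [castHom_projHom_of hj]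
  · obtain rfl : j = l := Fin.ext (hj.trans hl.symm)
    simp [projHom_of_last hl, he]

/-- Modulo `x_n` the conjugator of `x_i` commutes with `x_i`, hence is a power of it. -/
theorem map_conjugator_eq_one_of_mem_Kn {G : Type*} [Group G] {e : FG n →* G}
    (hl : (l : ℕ) = n - 1) (he : e (of l) = 1) (hil : i ≠ l) (hi : e (of i) = 1) (hφ : φ ∈ Kn n) :
    e (conjugator φ i) = 1 := by
  have hi_lt : (i : ℕ) < n - 1 := by have := Fin.val_ne_of_ne hil; omega
  have hproj : projHom n (of i) = of ⟨i, hi_lt⟩ := by simp [projHom, hi_lt]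
  have hconj : projHom n (conjugator φ i) * of ⟨i, hi_lt⟩ * (projHom n (conjugator φ i))⁻¹ =
      1 * of ⟨i, hi_lt⟩ * 1⁻¹ := by
    have h := mem_Kn_iff.mp hφ (of i)
    simpa [apply_of_eq_conjugator, hproj] using h
  rw [← map_castHom_projHom hl he]
  refine (map_eq_of_conj_of_eq hconj (e := e.comp (castHom n)) ?_).trans (_root_.map_one _)
  rw [← hproj, MonoidHom.comp_apply, map_castHom_projHom hl he, hi]

end Kernel

section Affine

variable (R : Type*) [CommRing R]

/-- The group of invertible affine maps `x ↦ u x + b` of the line over `R`. -/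
@[ext]
structure AffineGroup where
  slope : Rˣ
  translation : R

namespace AffineGroup

variable {R}

instance : One (AffineGroup R) := ⟨⟨1, 0⟩⟩

instance : Mul (AffineGroup R) :=
  ⟨fun p q => ⟨p.slope * q.slope, p.translation + p.slope * q.translation⟩⟩

instance : Inv (AffineGroup R) := ⟨fun p => ⟨p.slope⁻¹, -(↑p.slope⁻¹ * p.translation)⟩⟩

@[simp] theorem one_slope : (1 : AffineGroup R).slope = 1 := rfl

@[simp] theorem one_translation : (1 : AffineGroup R).translation = 0 := rfl

@[simp] theorem mul_slope (p q : AffineGroup R) : (p * q).slope = p.slope * q.slope := rfl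

@[simp] theorem mul_translation (p q : AffineGroup R) :
    (p * q).translation = p.translation + p.slope * q.translation := rfl

@[simp] theorem inv_slope (p : AffineGroup R) : p⁻¹.slope = p.slope⁻¹ := rfl

@[simp] theorem inv_translation (p : AffineGroup R) :
    p⁻¹.translation = -(↑p.slope⁻¹ * p.translation) := rfl

instance : Group (AffineGroup R) :=
  Group.ofLeftAxioms
    (fun p q r => AffineGroup.ext (mul_assoc _ _ _) <| by
      simp only [mul_translation, mul_slope, Units.val_mul]; ring)
    (fun p => AffineGroup.ext (one_mul _) <| by simp)
    (fun p => AffineGroup.ext (inv_mul_cancel _) <| by simp)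

/-- The derivative of an affine map, as a homomorphism. -/
def slopeHom : AffineGroup R →* Rˣ := MonoidHom.mk' slope mul_slope

@[simp] theorem slopeHom_apply (p : AffineGroup R) : slopeHom p = p.slope := rfl

theorem conj_slope (q p : AffineGroup R) : (q * p * q⁻¹).slope = p.slope := by
  simp

theorem conj_translation (q p : AffineGroup R) :
    (q * p * q⁻¹).translation = q.slope * p.translation + (1 - p.slope) * q.translation := by
  simp only [mul_translation, mul_slope, inv_translation, Units.val_mul]
  linear_combination (-(p.slope : R) * q.translation) * q.slope.mul_inv

/-- The unit translation and a nontrivial homothety have trivial joint centralizer. -/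
theorem eq_of_conj_eq_conj [IsDomain R] {t : Rˣ} (ht : t ≠ 1) {g h : AffineGroup R}
    (htrans : g * ⟨1, 1⟩ * g⁻¹ = h * ⟨1, 1⟩ * h⁻¹) (hscale : g * ⟨t, 0⟩ * g⁻¹ = h * ⟨t, 0⟩ * h⁻¹) :
    g = h := by
  have ht' : (1 - t : R) ≠ 0 := sub_ne_zero.mpr fun h => ht (Units.ext h.symm)
  refine AffineGroup.ext (Units.ext ?_) (mul_left_cancel₀ ht' ?_)
  · simpa only [conj_translation, Units.val_one, sub_self, zero_mul, mul_one, add_zero]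
      using congrArg translation htrans
  · simpa only [conj_translation, mul_zero, zero_add] using congrArg translation hscale

end AffineGroup

variable {R} {n : ℕ}

/-- The representation of `F_n` by affine maps in which `x_l` is the unit translation, `x_j` is
multiplication by `t`, and the other generators act trivially. -/
def affineHom (t : Rˣ) (j l : Fin n) : FG n →* AffineGroup R :=
  FreeGroup.lift fun r => if r = l then ⟨1, 1⟩ else if r = j then ⟨t, 0⟩ else 1

variable (t : Rˣ) {i j l : Fin n}

theorem affineHom_translating : affineHom t j l (of l) = ⟨1, 1⟩ := by
  simp [affineHom]

theorem affineHom_scaling (hjl : j ≠ l) : affineHom t j l (of j) = ⟨t, 0⟩ := by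
  simp [affineHom, hjl]

theorem affineHom_of_ne (hij : i ≠ j) (hil : i ≠ l) : affineHom t j l (of i) = 1 := by
  simp [affineHom, hij, hil]

theorem slope_affineHom_inv (x : FG n) :
    (affineHom t⁻¹ j l x).slope = (affineHom t j l x).slope⁻¹ := by
  refine DFunLike.congr_fun (f := AffineGroup.slopeHom.comp (affineHom t⁻¹ j l))
    (g := (AffineGroup.slopeHom.comp (affineHom t j l))⁻¹) (FreeGroup.ext_hom _ _ fun i => ?_) x
  simp only [affineHom, MonoidHom.comp_apply, MonoidHom.inv_apply, FreeGroup.lift_apply_of]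
  split_ifs <;> simp

theorem affineHom_conj_pow (hjl : j ≠ l) (k : ℕ) :
    affineHom t j l (of j ^ k * of l * (of j ^ k)⁻¹) = ⟨1, t ^ k⟩ := by
  have hpow : ((⟨t, 0⟩ : AffineGroup R) ^ k).slope = t ^ k :=
    _root_.map_pow AffineGroup.slopeHom _ k
  simp only [_root_.map_mul, _root_.map_inv, _root_.map_pow, affineHom_scaling t hjl,
    affineHom_translating]
  refine AffineGroup.ext (AffineGroup.conj_slope _ _) ?_
  simp [-AffineGroup.mul_translation, AffineGroup.conj_translation, hpow]

variable {t}

theorem affineHom_apply_eq_conj (hjl : j ≠ l) (φ : PSigmaAut n) (x : FG n) :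
    let g : AffineGroup R := ⟨(affineHom t j l (conjugator φ l)).slope,
      (affineHom t j l (conjugator φ j)).translation⟩
    affineHom t j l ((φ : MulAut (FG n)) x) = g * affineHom t j l x * g⁻¹ := by
  intro g
  refine DFunLike.congr_fun (f := (affineHom t j l).comp (φ : MulAut (FG n)).toMonoidHom)
    (g := (MulAut.conj g).toMonoidHom.comp (affineHom t j l)) (FreeGroup.ext_hom _ _ fun i => ?_) x
  change affineHom t j l ((φ : MulAut (FG n)) (of i)) = g * affineHom t j l (of i) * g⁻¹
  rw [apply_of_eq_conjugator, _root_.map_mul, _root_.map_mul, _root_.map_inv]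
  refine AffineGroup.ext ?_ ?_
  · simp only [AffineGroup.conj_slope]
  · rcases eq_or_ne i l with rfl | hil
    · simp only [AffineGroup.conj_translation, affineHom_translating, Units.val_one, sub_self,
        zero_mul, add_zero, g]
    rcases eq_or_ne i j with rfl | hij
    · simp only [AffineGroup.conj_translation, affineHom_scaling t hil, mul_zero, zero_add, g]
    · simp [affineHom_of_ne t hij hil]

variable [IsDomain R]

theorem isConjEquivariant_affineHom (ht : t ≠ 1) (hjl : j ≠ l) :
    IsConjEquivariant (affineHom t j l) := by
  refine fun φ => ⟨_, affineHom_apply_eq_conj hjl φ, fun g hg => ?_⟩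
  refine AffineGroup.eq_of_conj_eq_conj ht ?_ ?_
  · rw [← affineHom_translating t (j := j), ← hg, affineHom_apply_eq_conj hjl]
  · rw [← affineHom_scaling t hjl, ← hg, affineHom_apply_eq_conj hjl]

theorem slope_conjHom_affineHom (ht : t ≠ 1) (hjl : j ≠ l) (φ : PSigmaAut n) :
    ((isConjEquivariant_affineHom ht hjl).conjHom φ).slope =
      (affineHom t j l (conjugator φ l)).slope := by
  rw [(isConjEquivariant_affineHom ht hjl).conjHom_eq (affineHom_apply_eq_conj hjl φ)]

theorem slope_conjHomAt_affineHom_inv (ht : t ≠ 1) (hl : (l : ℕ) = n - 1)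
    (hij : i ≠ j) (hil : i ≠ l) (hjl : j ≠ l) {φ : PSigmaAut n} (hφ : φ ∈ Kn n) :
    ((isConjEquivariant_affineHom (inv_ne_one.mpr ht) hjl).conjHomAt
      (affineHom_of_ne t⁻¹ hij hil) φ).slope =
      ((isConjEquivariant_affineHom ht hjl).conjHom φ).slope⁻¹ := by
  have hslope : (affineHom t⁻¹ j l (conjugator φ i)).slope = 1 :=
    map_conjugator_eq_one_of_mem_Kn (e := AffineGroup.slopeHom.comp (affineHom t⁻¹ j l)) hl
      (by simp [affineHom_translating]) hil (by simp [affineHom_of_ne _ hij hil]) hφ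
  rw [IsConjEquivariant.conjHomAt_apply, AffineGroup.mul_slope, AffineGroup.inv_slope, hslope,
    inv_one, one_mul, slope_conjHom_affineHom (inv_ne_one.mpr ht) hjl,
    slope_conjHom_affineHom ht hjl, slope_affineHom_inv]

end Affine

section Hall

variable (R : Type*) [CommRing R]

/-- P. Hall's group of matrices `[[1, a, c], [0, u, b], [0, 0, 1]]`, a central extension of a group
of pairs of affine maps by the additive group of the corner entries `c`. -/
@[ext]
structure HallGroup where
  u : Rˣ
  a : R
  b : R
  c : R

namespace HallGroup

variable {R}

instance : One (HallGroup R) := ⟨⟨1, 0, 0, 0⟩⟩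

instance : Mul (HallGroup R) :=
  ⟨fun M N => ⟨M.u * N.u, N.a + M.a * N.u, M.b + M.u * N.b, N.c + M.a * N.b + M.c⟩⟩

instance : Inv (HallGroup R) :=
  ⟨fun M => ⟨M.u⁻¹, -(M.a * ↑M.u⁻¹), -(↑M.u⁻¹ * M.b), M.a * ↑M.u⁻¹ * M.b - M.c⟩⟩

theorem one_def : (1 : HallGroup R) = ⟨1, 0, 0, 0⟩ := rfl

theorem mul_def (M N : HallGroup R) :
    M * N = ⟨M.u * N.u, N.a + M.a * N.u, M.b + M.u * N.b, N.c + M.a * N.b + M.c⟩ := rfl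

theorem inv_def (M : HallGroup R) :
    M⁻¹ = ⟨M.u⁻¹, -(M.a * ↑M.u⁻¹), -(↑M.u⁻¹ * M.b), M.a * ↑M.u⁻¹ * M.b - M.c⟩ := rfl

instance : Group (HallGroup R) :=
  Group.ofLeftAxioms
    (fun M N P => by ext <;> simp only [mul_def, Units.val_mul] <;> ring)
    (fun M => by ext <;> simp [one_def, mul_def])
    (fun M => by ext <;> simp [one_def, mul_def, inv_def, ← sub_eq_add_neg])

variable (R) in
/-- The embedding of the additive group of `R` as the corner entry. -/
def corner : Multiplicative R →* HallGroup R :=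
  MonoidHom.mk' (fun r => ⟨1, 0, 0, r.toAdd⟩) fun r s => by
    ext <;> simp [mul_def, add_comm]

theorem corner_apply (r : Multiplicative R) : corner R r = ⟨1, 0, 0, r.toAdd⟩ := rfl

variable (R) in
theorem corner_injective : Function.Injective (corner R) :=
  fun _ _ h => congrArg c h

variable (R) in
theorem range_corner_le_center : (corner R).range ≤ Subgroup.center (HallGroup R) := by
  rintro _ ⟨r, rfl⟩
  refine Subgroup.mem_center_iff.mpr fun M => ?_
  ext <;> simp [corner_apply, mul_def, add_comm]

variable (R) in
/-- The two affine maps given by the triangular `2 × 2` blocks of a matrix in `HallGroup R`; the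
upper block acts on row vectors, whence the inverse. -/
def blocks : HallGroup R →* AffineGroup R × AffineGroup R :=
  MonoidHom.mk' (fun M => (⟨M.u⁻¹, ↑M.u⁻¹ * M.a⟩, ⟨M.u, M.b⟩)) fun M N => by
    have hslope : (M.u * N.u)⁻¹ = M.u⁻¹ * N.u⁻¹ := mul_inv M.u N.u
    refine Prod.ext (AffineGroup.ext hslope ?_) rfl
    simp only [mul_def, hslope, Prod.fst_mul, AffineGroup.mul_translation, Units.val_mul]
    linear_combination (↑M.u⁻¹ * M.a) * N.u.inv_mul

theorem blocks_apply (M : HallGroup R) :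
    blocks R M = (⟨M.u⁻¹, ↑M.u⁻¹ * M.a⟩, ⟨M.u, M.b⟩) := rfl

variable (R) in
theorem ker_blocks : (blocks R).ker = (corner R).range := by
  refine le_antisymm (fun M hM => ?_) ?_
  · simp only [MonoidHom.mem_ker, blocks_apply, Prod.ext_iff, AffineGroup.ext_iff] at hM
    obtain ⟨⟨-, ha⟩, hu, hb⟩ := hM
    exact ⟨.ofAdd M.c, HallGroup.ext hu.symm
      ((Units.mul_right_eq_zero _).mp ha).symm hb.symm rfl⟩
  · rintro _ ⟨r, rfl⟩
    simp [MonoidHom.mem_ker, blocks_apply, corner_apply, Prod.ext_iff, AffineGroup.ext_iff]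

theorem mem_range_blocks {q : AffineGroup R × AffineGroup R} (hq : q.1.slope = q.2.slope⁻¹) :
    q ∈ (blocks R).range := by
  refine ⟨⟨q.2.slope, q.2.slope * q.1.translation, q.2.translation, 0⟩, ?_⟩
  ext <;> simp [blocks_apply, hq]

theorem commutatorElement_upper_lower (a b : R) :
    ⁅(⟨1, a, 0, 0⟩ : HallGroup R), ⟨1, 0, b, 0⟩⁆ = corner R (.ofAdd (a * b)) := by
  simp [commutatorElement_def, mul_def, inv_def, corner_apply]

end HallGroup

end Hall

section KernelElements

variable {n : ℕ}

/-- The inner automorphism `x ↦ g x g⁻¹` as an element of `PΣ_n`. -/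
def innerP (g : FG n) : PSigmaAut n := ⟨MulAut.conj g, fun _ => ⟨g, rfl⟩⟩

theorem innerP_apply (g x : FG n) : (innerP g : MulAut (FG n)) x = g * x * g⁻¹ := rfl

theorem innerP_mem_Kn {g : FG n} (hg : projHom n g = 1) : innerP g ∈ Kn n :=
  mem_Kn_iff.mpr fun x => by simp [innerP_apply, hg]

theorem commute_innerP {φ : PSigmaAut n} {g : FG n} (hg : (φ : MulAut (FG n)) g = g) :
    Commute φ (innerP g) := by
  refine Subtype.ext (MulEquiv.ext fun x => ?_)
  simp [innerP_apply, hg]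

variable {i l : Fin n}

theorem alphaP_apply_self (hil : i ≠ l) :
    (alphaP n i l : MulAut (FG n)) (of i) = of l * of i * (of l)⁻¹ := by
  simp [alphaP, alphaAut_apply_of n hil]

theorem alphaP_apply_of_ne (hil : i ≠ l) {r : Fin n} (hr : r ≠ i) :
    (alphaP n i l : MulAut (FG n)) (of r) = of r := by
  simp [alphaP, alphaAut_apply_of n hil, hr]

theorem alphaP_mem_Kn (hl : (l : ℕ) = n - 1) (hil : i ≠ l) : alphaP n i l ∈ Kn n := by
  refine mem_Kn_of_forall_of fun r => ?_
  obtain rfl | hr := eq_or_ne r i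
  · simp [alphaP_apply_self hil, projHom_of_last hl]
  · rw [alphaP_apply_of_ne hil hr]

namespace IsConjEquivariant

variable {G : Type*} [Group G] {e : FG n →* G} (he : IsConjEquivariant e)
include he

theorem conjHom_innerP (g : FG n) : he.conjHom (innerP g) = e g :=
  he.conjHom_eq fun x => by simp [innerP_apply]

theorem conjHom_alphaP (hil : i ≠ l) (hi : e (of i) = 1) : he.conjHom (alphaP n i l) = 1 := by
  refine he.conjHom_eq <| DFunLike.congr_fun
    (f := e.comp (alphaP n i l : MulAut (FG n)).toMonoidHom)
    (g := (MulAut.conj 1).toMonoidHom.comp e) (FreeGroup.ext_hom _ _ fun r => ?_)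
  obtain rfl | hr := eq_or_ne r i
  · simp [alphaP_apply_self hil, hi]
  · simp [alphaP_apply_of_ne hil hr]

theorem conjHomAt_innerP (hi : e (of i) = 1) (g : FG n) : he.conjHomAt hi (innerP g) = 1 := by
  rw [he.conjHomAt_apply, he.conjHom_innerP, map_conjugator_eq (innerP_apply g (of i)) hi,
    inv_mul_cancel]

theorem conjHomAt_alphaP (hil : i ≠ l) (hi : e (of i) = 1) :
    he.conjHomAt hi (alphaP n i l) = (e (of l))⁻¹ := by
  rw [he.conjHomAt_apply, he.conjHom_alphaP hil hi, map_conjugator_eq (alphaP_apply_self hil) hi,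
    mul_one]

end IsConjEquivariant

end KernelElements

section IntegralPowers

theorem isIntegral_of_forall_pow_mem {S : Type*} [Ring S] {x : S} {Z : AddSubgroup S} (hZ : Z.FG)
    (hx : ∀ k : ℕ, x ^ k ∈ Z) : IsIntegral ℤ x := by
  have : IsNoetherian ℤ Z.toIntSubmodule :=
    isNoetherian_of_fg_of_noetherian _ (Submodule.fg_iff_addSubgroup_fg _ |>.mpr hZ)
  have adjoin_le : (Algebra.adjoin ℤ {x}).toSubmodule ≤ Z.toIntSubmodule := by
    rw [Algebra.adjoin_eq_span, Submodule.span_le]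
    intro y hy
    obtain ⟨k, rfl⟩ := Submonoid.mem_closure_singleton.mp hy
    exact hx k
  exact isIntegral_of_submodule_noetherian _ (isNoetherian_of_le adjoin_le) x
    (Algebra.self_mem_adjoin_singleton ℤ x)

theorem not_isIntegral_inv_two : ¬ IsIntegral ℤ (2⁻¹ : ℚ) := by
  rw [IsIntegrallyClosed.isIntegral_iff]
  rintro ⟨m, hm⟩
  have : (2 * m : ℚ) = 1 := by
    rw [← eq_intCast (algebraMap ℤ ℚ), hm]; norm_num
  norm_cast at this
  omega

end IntegralPowers

section NotFinitelyPresented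

variable {n : ℕ} {R : Type*} [CommRing R] [IsDomain R] {t : Rˣ} {i j l : Fin n}

/-- The homomorphism along which the central extension `HallGroup.blocks` is pulled back to `K_n`:
the action on the representation `affineHom t⁻¹ j l`, normalised at `x_i`, paired with the action on
`affineHom t j l`. -/
noncomputable def affinePairHom (ht : t ≠ 1) (hij : i ≠ j) (hil : i ≠ l) (hjl : j ≠ l) :
    Kn n →* AffineGroup R × AffineGroup R :=
  (((isConjEquivariant_affineHom (inv_ne_one.mpr ht) hjl).conjHomAt
    (affineHom_of_ne t⁻¹ hij hil)).prod (isConjEquivariant_affineHom ht hjl).conjHom).comp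
    (Kn n).subtype

variable (ht : t ≠ 1) (hij : i ≠ j) (hil : i ≠ l) (hjl : j ≠ l)

theorem range_affinePairHom_le (hl : (l : ℕ) = n - 1) :
    (affinePairHom ht hij hil hjl).range ≤ (HallGroup.blocks R).range := by
  rintro _ ⟨φ, rfl⟩
  exact HallGroup.mem_range_blocks (slope_conjHomAt_affineHom_inv ht hl hij hil hjl φ.2)

theorem affinePairHom_alphaP (h : alphaP n i l ∈ Kn n) :
    affinePairHom ht hij hil hjl ⟨alphaP n i l, h⟩ = (⟨1, -1⟩, 1) := by
  refine Prod.ext ?_ ?_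
  · refine (IsConjEquivariant.conjHomAt_alphaP _ hil _).trans ?_
    rw [affineHom_translating]
    ext <;> simp
  · exact IsConjEquivariant.conjHom_alphaP _ hil (affineHom_of_ne t hij hil)

theorem affinePairHom_innerP {g : FG n} (h : innerP g ∈ Kn n) :
    affinePairHom ht hij hil hjl ⟨innerP g, h⟩ = (1, affineHom t j l g) :=
  Prod.ext (IsConjEquivariant.conjHomAt_innerP _ _ _) (IsConjEquivariant.conjHom_innerP _ _)

include ht hij hil hjl in
theorem exists_addSubgroup_fg_pow_mem {α : Type*} {κ : FreeGroup α →* Kn n}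
    (hl : (l : ℕ) = n - 1) (hκ_surj : Function.Surjective κ)
    (hκ_ker : κ.ker.IsFinitelyNormallyGenerated) :
    ∃ Z : AddSubgroup R, Z.FG ∧ ∀ k : ℕ, (t ^ k : R) ∈ Z := by
  obtain ⟨Z, hZ, hcomm⟩ := exists_fg_commutatorElement_mem hκ_surj hκ_ker
    (HallGroup.range_corner_le_center R) (HallGroup.ker_blocks R)
    (range_affinePairHom_le ht hij hil hjl hl)
  obtain ⟨S, rfl⟩ := AddSubgroup.toSubgroup.surjective Z
  refine ⟨S, (AddSubgroup.fg_iff_mul_fg S).mpr hZ, fun k => ?_⟩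
  let g : FG n := of j ^ k * of l * (of j ^ k)⁻¹
  have alphaP_mem : alphaP n i l ∈ Kn n := alphaP_mem_Kn hl hil
  have innerP_mem : innerP g ∈ Kn n := innerP_mem_Kn (by simp [g, projHom_of_last hl])
  have alphaP_apply_g : (alphaP n i l : MulAut (FG n)) g = g := by
    simp [g, alphaP_apply_of_ne hil hij.symm, alphaP_apply_of_ne hil hil.symm]
  have hcommute : Commute (⟨_, alphaP_mem⟩ : Kn n) ⟨_, innerP_mem⟩ :=
    Subtype.ext (commute_innerP alphaP_apply_g)
  have hmem := hcomm _ _ hcommute ⟨1, -1, 0, 0⟩ ⟨1, 0, t ^ k, 0⟩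
    (by rw [affinePairHom_alphaP]; simp [HallGroup.blocks_apply, AffineGroup.ext_iff])
    (by rw [affinePairHom_innerP, affineHom_conj_pow t hjl]
        simp [HallGroup.blocks_apply, AffineGroup.ext_iff])
  rw [HallGroup.commutatorElement_upper_lower,
    Subgroup.mem_map_iff_mem (HallGroup.corner_injective R)] at hmem
  have neg_pow_mem : -1 * (t ^ k : R) ∈ S := hmem
  simpa using neg_pow_mem

end NotFinitelyPresented

theorem statement2_general {n : ℕ} (hn : 3 ≤ n) {α : Type*} {rels : Set (FreeGroup α)}
    (hrels : rels.Finite) : IsEmpty (Kn n ≃* PresentedGroup rels) := by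
  refine ⟨fun iso => ?_⟩
  let κ : FreeGroup α →* Kn n := iso.symm.toMonoidHom.comp (PresentedGroup.mk rels)
  have κ_surjective : Function.Surjective κ :=
    iso.symm.surjective.comp (PresentedGroup.mk_surjective rels)
  have ker_κ : κ.ker = Subgroup.normalClosure rels := by
    ext u
    simp [κ, MonoidHom.mem_ker, PresentedGroup.mk_eq_one_iff]
  let t : ℚˣ := Units.mk0 2⁻¹ (by norm_num)
  have ht : t ≠ 1 := by simp [t, Units.ext_iff]
  let i : Fin n := ⟨0, by omega⟩
  let j : Fin n := ⟨1, by omega⟩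
  let l : Fin n := ⟨n - 1, by omega⟩
  have hij : i ≠ j := by simp [i, j]
  have hil : i ≠ l := by rw [Ne, Fin.mk.injEq]; omega
  have hjl : j ≠ l := by rw [Ne, Fin.mk.injEq]; omega
  obtain ⟨Z, hZ, ht_pow⟩ := exists_addSubgroup_fg_pow_mem ht hij hil hjl rfl κ_surjective
    ⟨rels, hrels, ker_κ.symm⟩
  exact not_isIntegral_inv_two (isIntegral_of_forall_pow_mem hZ ht_pow)

/-- STATEMENT 2: For every `n ≥ 3`, the group `K_n` is not finitely presentable: there is no
group isomorphism between `K_n` and a presented group on a finite generating set with a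
finite set of relators. -/
theorem statement2 (n : ℕ) (hn : 3 ≤ n) :
    ¬ ∃ (α : Type) (_ : Finite α) (rels : Set (FreeGroup α)) (_ : rels.Finite),
        Nonempty (↥(Kn n) ≃* PresentedGroup rels) := by
  rintro ⟨α, _, rels, hrels, ⟨iso⟩⟩
  exact (statement2_general hn hrels).false iso
end

section
/- For every n ≥ 2, the first homology group H_1(K_n; ℤ) is isomorphic to ℤ^{2n−2}; equivalently, the abelianization of K_n is a free abelian group of rank 2n−2. -/
open FreeGroup

/-!
The group `K_n` is generated by the `2n - 2` McCool generators `α_{in}` and `α_{ni}`. Indeed, the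
subgroup they generate is normal by McCool's relations, together with the `α_{ij}` for `i, j < n` it
generates `PΣ_n`, and the subgroup generated by the latter meets `K_n` trivially.

That the `α_{ij}` generate `PΣ_n` follows by shortening conjugators: when no elementary move
`w_i ↦ w_j x_j^{±1} w_j⁻¹ w_i` shortens the family `w`, the elements `w_j x_j^{±1} w_j⁻¹` play
ping-pong on the sets of reduced words starting with `w_j x_j^{±1}`, so they generate the whole free
group only if `w = 1`.

If `φ x_i = w x_i w⁻¹`, then `w` is determined up to the centralizer of `x_i`, so for `j ≠ i` the
exponent sum of `x_j` in `w` is a well-defined homomorphism `PΣ_n → ℤ`. These homomorphisms are dual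
to the `α_{ij}`, whose classes in the abelianization of the subgroup generated by any of them are
therefore linearly independent.
-/

section ConjugatesOfGenerators

variable {α : Type*}

lemma mk_cons_eq_mul (s : α × Bool) (L : List (α × Bool)) :
    FreeGroup.mk (s :: L) = FreeGroup.mk [s] * FreeGroup.mk L := by
  rw [mul_mk, List.singleton_append]

lemma inv_mk_singleton (s : α × Bool) :
    (FreeGroup.mk [s])⁻¹ = FreeGroup.mk [(s.1, !s.2)] := by
  simp [inv_mk, invRev]

/-- The endomorphism `x_i ↦ w_i x_i w_i⁻¹` of a free group with conjugators `w`. -/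
def conjGenerators (w : α → FreeGroup α) : FreeGroup α →* FreeGroup α :=
  FreeGroup.lift fun i => w i * of i * (w i)⁻¹

lemma conjGenerators_of (w : α → FreeGroup α) (i : α) :
    conjGenerators w (of i) = w i * of i * (w i)⁻¹ :=
  FreeGroup.lift_apply_of

lemma conjGenerators_mk_singleton (w : α → FreeGroup α) (s : α × Bool) :
    conjGenerators w (FreeGroup.mk [s]) = w s.1 * FreeGroup.mk [s] * (w s.1)⁻¹ := by
  obtain ⟨i, _ | _⟩ := s <;> simp [conjGenerators, of, invRev, mul_assoc]

variable [DecidableEq α]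

lemma toWord_mk_singleton_mul {s : α × Bool} {g : FreeGroup α}
    (h : ¬ [(s.1, !s.2)] <+: g.toWord) : (FreeGroup.mk [s] * g).toWord = s :: g.toWord := by
  suffices IsReduced (s :: g.toWord) by
    simpa [toWord_mul, isReduced_iff_reduce_eq] using this
  cases hg : g.toWord with
  | nil => exact IsReduced.singleton
  | cons t L =>
    rw [isReduced_cons_cons, ← hg]
    refine ⟨fun hst => ?_, isReduced_toWord⟩
    by_contra hne
    exact h (by simp [hg, hst, ← Bool.eq_not.2 (Ne.symm hne)])

lemma toWord_mul_of_isReduced_append {w g : FreeGroup α} {s : α × Bool}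
    (hw : IsReduced (w.toWord ++ [s])) (hg : [s] <+: g.toWord) :
    (w * g).toWord = w.toWord ++ g.toWord := by
  obtain ⟨L, hL⟩ := hg
  rw [toWord_mul, ← isReduced_iff_reduce_eq, ← hL, ← List.append_assoc]
  exact hw.append_overlap (hL ▸ isReduced_toWord) (List.cons_ne_nil s [])

lemma isReduced_toWord_append_of_norm_le {g : FreeGroup α} {s : α × Bool}
    (h : g.norm ≤ (g * FreeGroup.mk [s]).norm) : IsReduced (g.toWord ++ [s]) := by
  rcases List.eq_nil_or_concat g.toWord with hg | ⟨L, t, hg⟩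
  · simp [hg]
  · rw [List.concat_eq_append] at hg
    suffices IsReduced ([t] ++ [s]) by
      rw [hg]
      exact (hg ▸ isReduced_toWord : IsReduced (L ++ [t])).append_overlap this (by simp)
    rw [List.singleton_append, isReduced_cons_cons]
    refine ⟨fun hts => ?_, IsReduced.singleton⟩
    by_contra hne
    have ht : FreeGroup.mk [t] = (FreeGroup.mk [s])⁻¹ := by
      rw [inv_mk_singleton, ← hts, ← Bool.eq_not.2 hne]
    have hgs : g * FreeGroup.mk [s] = FreeGroup.mk L := by
      rw [← mk_toWord (x := g), hg, ← mul_mk, ht, inv_mul_cancel_right]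
    have hlen : g.norm = L.length + 1 := by simp [FreeGroup.norm, hg]
    have := norm_mk_le (L₁ := L)
    rw [hgs] at h
    omega

lemma prefix_toWord_conj_mul {w g : FreeGroup α} {s : α × Bool}
    (hs : IsReduced (w.toWord ++ [s])) (hs' : IsReduced (w.toWord ++ [(s.1, !s.2)]))
    (hg : ¬ w.toWord ++ [(s.1, !s.2)] <+: g.toWord) :
    w.toWord ++ [s] <+: (w * FreeGroup.mk [s] * w⁻¹ * g).toWord := by
  have hu : ¬ [(s.1, !s.2)] <+: (w⁻¹ * g).toWord := fun hu => hg <| by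
    rw [← mul_inv_cancel_left w g, toWord_mul_of_isReduced_append hs' hu]
    exact (List.prefix_append_right_inj _).2 hu
  have hsu := toWord_mk_singleton_mul hu
  have hprefix : [s] <+: (FreeGroup.mk [s] * (w⁻¹ * g)).toWord := by simp [hsu]
  rw [mul_assoc, mul_assoc, toWord_mul_of_isReduced_append hs hprefix]
  exact (List.prefix_append_right_inj _).2 hprefix

/-- A family of conjugators is reduced when no elementary move `w_i ↦ w_j x_j^{±1} w_j⁻¹ w_i`
shortens `w_i`. The letter `s = (j, ε)` encodes `x_j^{±1}`; for `j = i` the move appends `x_i^{±1}`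
to `w_i`, which does not change `w_i x_i w_i⁻¹`. -/
def IsConjReduced (w : α → FreeGroup α) : Prop :=
  ∀ i s, (w i).norm ≤ (w s.1 * FreeGroup.mk [s] * (w s.1)⁻¹ * w i).norm

namespace IsConjReduced

variable {w : α → FreeGroup α}

lemma isReduced_append (hw : IsConjReduced w) (s : α × Bool) :
    IsReduced ((w s.1).toWord ++ [s]) :=
  isReduced_toWord_append_of_norm_le <| by simpa using hw s.1 s

lemma not_prefix (hw : IsConjReduced w) (i : α) (s : α × Bool) :
    ¬ (w s.1).toWord ++ [s] <+: (w i).toWord := by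
  rintro ⟨L, hL⟩
  have hwi : w i = w s.1 * FreeGroup.mk [s] * FreeGroup.mk L := by
    rw [← mk_toWord (x := w i), ← hL, ← mul_mk, ← mul_mk, mk_toWord]
  have hred := hw i (s.1, !s.2)
  have heq : w s.1 * FreeGroup.mk [(s.1, !s.2)] * (w s.1)⁻¹ * w i = w s.1 * FreeGroup.mk L := by
    rw [hwi, ← inv_mk_singleton]; group
  have hlen : (w i).norm = (w s.1).norm + 1 + L.length := by
    simp only [FreeGroup.norm, ← hL, List.length_append, List.length_singleton]
  have := norm_mul_le (w s.1) (FreeGroup.mk L)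
  have := norm_mk_le (L₁ := L)
  rw [heq] at hred
  omega

lemma eq_of_prefix_of_prefix (hw : IsConjReduced w) {s t : α × Bool} {L : List (α × Bool)}
    (hs : (w s.1).toWord ++ [s] <+: L) (ht : (w t.1).toWord ++ [t] <+: L) : s = t := by
  wlog h : (w s.1).toWord ++ [s] <+: (w t.1).toWord ++ [t] generalizing s t
  · exact (this ht hs ((List.prefix_or_prefix_of_prefix hs ht).resolve_left h)).symm
  rcases List.prefix_concat_iff.1 h with h | h
  · simpa using List.append_inj_right' h rfl
  · exact absurd h (hw.not_prefix _ _)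

lemma prefix_toWord_conjGenerators (hw : IsConjReduced w) (s : α × Bool) (L : List (α × Bool))
    (hL : IsReduced (s :: L)) :
    (w s.1).toWord ++ [s] <+: (conjGenerators w (FreeGroup.mk (s :: L))).toWord := by
  induction L generalizing s with
  | nil =>
    rw [conjGenerators_mk_singleton, ← mul_one (_ * _ * _)]
    exact prefix_toWord_conj_mul (hw.isReduced_append s) (hw.isReduced_append (s.1, !s.2)) (by simp)
  | cons t L ih =>
    rw [mk_cons_eq_mul, _root_.map_mul, conjGenerators_mk_singleton]
    refine prefix_toWord_conj_mul (hw.isReduced_append s) (hw.isReduced_append (s.1, !s.2))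
      fun hs => ?_
    rw [isReduced_cons_cons] at hL
    have hst := hw.eq_of_prefix_of_prefix (s := (s.1, !s.2)) hs (ih t hL.2)
    simp [← hst] at hL

theorem eq_one_of_surjective (hw : IsConjReduced w)
    (hsurj : Function.Surjective (conjGenerators w)) : w = 1 := by
  ext1 i
  obtain ⟨g, hg⟩ := hsurj (of i)
  cases hgL : g.toWord with
  | nil => exact absurd hg (by rw [toWord_eq_nil_iff.1 hgL, _root_.map_one]; exact one_ne_of i)
  | cons s L =>
    have hprefix := hw.prefix_toWord_conjGenerators s L (hgL ▸ isReduced_toWord)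
    rw [← hgL, mk_toWord, hg, toWord_of] at hprefix
    have hws : (w s.1).toWord = [] := by
      have := hprefix.length_le
      rw [← List.length_eq_zero_iff]
      simp only [List.length_append, List.length_singleton] at this
      omega
    obtain rfl : s = (i, true) := by simpa [hws] using hprefix
    exact toWord_eq_nil_iff.1 hws

end IsConjReduced

lemma sum_norm_update_lt {ι : Type*} [Fintype ι] [DecidableEq ι] {w : ι → FreeGroup α} {i : ι}
    {g : FreeGroup α} (h : g.norm < (w i).norm) :
    ∑ k, (Function.update w i g k).norm < ∑ k, (w k).norm :=
  Fintype.sum_strictMono <|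
    (Function.comp_update FreeGroup.norm w i g).trans_lt (update_lt_self_iff.2 h)

end ConjugatesOfGenerators

section CentralizerOfGenerator

variable {α Q : Type*} [Group Q]

theorem map_eq_one_of_commute_of (f : FreeGroup α →* Q) {i : α} (hi : f (of i) = 1)
    {w : FreeGroup α} (hw : Commute w (of i)) : f w = 1 := by
  classical
  -- In the wreath product, conjugating the base element `δ` by `ψ w` translates it by `f w`.
  let δ : Q → Multiplicative ℤ := Pi.mulSingle 1 (Multiplicative.ofAdd 1)
  let ψ : FreeGroup α →* RegularWreathProduct (Multiplicative ℤ) Q :=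
    FreeGroup.lift fun r => if r = i then ⟨δ, 1⟩ else ⟨1, f (of r)⟩
  have hψi : ψ (of i) = ⟨δ, 1⟩ := by simp [ψ]
  have hright (u : FreeGroup α) : (ψ u).right = f u := by
    suffices RegularWreathProduct.rightHom.comp ψ = f from DFunLike.congr_fun this u
    ext r
    by_cases hr : r = i
    · subst hr; simp [hψi, hi]
    · simp [ψ, hr]
  have hleft : (fun x => δ ((f w)⁻¹ * x)) = δ := by
    have h := congrArg RegularWreathProduct.left (hw.map ψ).eq
    simpa [hψi, hright, mul_comm] using h
  by_contra hne
  have h1 : δ 1 = δ (f w)⁻¹ := by simpa using (congrFun hleft 1).symm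
  have h2 : δ (f w)⁻¹ = 1 := Pi.mulSingle_eq_of_ne (inv_ne_one.2 hne) _
  simpa [δ] using h1.trans h2

theorem map_eq_map_of_conj_of_eq (f : FreeGroup α →* Q) {i : α} (hi : f (of i) = 1)
    {u v : FreeGroup α} (h : u * of i * u⁻¹ = v * of i * v⁻¹) : f u = f v := by
  have hcomm : Commute (v⁻¹ * u) (of i) := by
    have hu : u * of i = v * of i * v⁻¹ * u := by rw [← h]; group
    rw [commute_iff_eq, mul_assoc, hu]; group
  have hmap := map_eq_one_of_commute_of f hi hcomm
  rw [_root_.map_mul, _root_.map_inv, inv_mul_eq_one] at hmap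
  exact hmap.symm

end CentralizerOfGenerator

/-- The exponent sum of the generator `j`, as a homomorphism to multiplicative integers. -/
def exponentSum {α : Type*} [DecidableEq α] (j : α) : FreeGroup α →* Multiplicative ℤ :=
  FreeGroup.lift fun r => if j = r then Multiplicative.ofAdd 1 else 1

section AbelianizationBasis

variable {ι G : Type*} [DecidableEq ι] [Group G]

theorem nonempty_basis_abelianization_closure_range {g : ι → G} (Ψ : ι → G →* Multiplicative ℤ)
    (hΨ : ∀ s t, Ψ s (g t) = if s = t then Multiplicative.ofAdd 1 else 1) :
    Nonempty (Module.Basis ι ℤ (Additive (Abelianization (Subgroup.closure (Set.range g))))) := by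
  let b (t : ι) : Additive (Abelianization (Subgroup.closure (Set.range g))) :=
    .ofMul (.of ⟨g t, Subgroup.subset_closure ⟨t, rfl⟩⟩)
  let coord : Additive (Abelianization (Subgroup.closure (Set.range g))) →ₗ[ℤ] ι → ℤ :=
    LinearMap.pi fun s => (MonoidHom.toAdditiveLeft
      (Abelianization.lift ((Ψ s).comp (Subgroup.subtype _)))).toIntLinearMap
  have hcoord : coord ∘ b = fun t => Pi.single t 1 := by
    ext t s
    rcases eq_or_ne s t with rfl | hst <;> simp [coord, b, *]
  have hindep : LinearIndependent ℤ b :=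
    .of_comp coord (hcoord ▸ Pi.linearIndependent_single_one ι ℤ)
  have hspan (x : G) (hx : x ∈ Subgroup.closure (Set.range g)) :
      Additive.ofMul (Abelianization.of (⟨x, hx⟩ : Subgroup.closure (Set.range g))) ∈
        Submodule.span ℤ (Set.range b) := by
    induction hx using Subgroup.closure_induction with
    | mem _ h =>
      obtain ⟨t, rfl⟩ := h
      exact Submodule.subset_span ⟨t, rfl⟩
    | one => exact zero_mem _
    | mul x y hx hy ihx ihy => exact add_mem ihx ihy
    | inv x hx ihx => exact neg_mem ihx
  refine ⟨Module.Basis.mk hindep fun y _ => ?_⟩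
  obtain ⟨⟨x, hx⟩, rfl⟩ := QuotientGroup.mk_surjective y.toMul
  exact hspan x hx

end AbelianizationBasis

lemma conj_mem_of_commute_mul {G : Type*} [Group G] {L : Subgroup G} {a g s : G}
    (ha : a ∈ L) (hs : s ∈ L) (h : Commute (a * g) s) : g * s * g⁻¹ ∈ L := by
  have hconj : g * s * g⁻¹ = a⁻¹ * s * a := by
    rw [mul_inv_eq_iff_eq_mul, mul_assoc, mul_assoc, ← h.eq]
    group
  exact hconj ▸ mul_mem (mul_mem (inv_mem ha) hs) ha

namespace PSigmaAut

variable {n : ℕ}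

section McCoolGenerators

lemma ext_of {φ ψ : PSigmaAut n} (h : ∀ r, φ.1 (of r) = ψ.1 (of r)) : φ = ψ := by
  refine Subtype.ext (MulEquiv.toMonoidHom_injective ?_)
  ext r
  exact h r

lemma alphaP_self (i : Fin n) : alphaP n i i = 1 := by
  simp [alphaP, alphaAut]

lemma alphaP_apply_of (i j r : Fin n) :
    (alphaP n i j).1 (of r) = if r = i then of j * of i * (of j)⁻¹ else of r := by
  rcases eq_or_ne i j with rfl | hij
  · simp +contextual [alphaP_self]
  · exact alphaAut_apply_of n hij r

lemma alphaP_inv_apply_of (i j r : Fin n) :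
    (alphaP n i j)⁻¹.1 (of r) = if r = i then (of j)⁻¹ * of i * of j else of r := by
  rcases eq_or_ne i j with rfl | hij
  · simp +contextual [alphaP_self]
  · refine (alphaP n i j).1.injective ?_
    rw [InvMemClass.coe_inv, MulAut.apply_inv_self]
    split_ifs with hr
    · simp [alphaP_apply_of, hr, hij.symm, mul_assoc]
    · simp [alphaP_apply_of, hr]

theorem commute_alphaP {i j k l : Fin n} (hik : i ≠ k) (hil : i ≠ l) (hjk : j ≠ k) :
    Commute (alphaP n i j) (alphaP n k l) := by
  refine ext_of fun r => ?_
  rcases eq_or_ne r i with rfl | hi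
  · simp [alphaP_apply_of, hik, hjk]
  · rcases eq_or_ne r k with rfl | hk <;> simp [alphaP_apply_of, *, hil.symm]

theorem commute_alphaP_mul_alphaP {i j : Fin n} (hij : i ≠ j) (k : Fin n) :
    Commute (alphaP n i j * alphaP n k j) (alphaP n i k) := by
  rcases eq_or_ne i k with rfl | hik
  · simp [alphaP_self]
  rcases eq_or_ne k j with rfl | hkj
  · simp [alphaP_self]
  refine ext_of fun r => ?_
  rcases eq_or_ne r i with rfl | hi
  · simp [alphaP_apply_of, hij.symm, hik, hik.symm, mul_assoc]
  · rcases eq_or_ne r k with rfl | hk <;> simp [alphaP_apply_of, *, hij.symm, hik.symm]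

end McCoolGenerators

section Generation

/-- The subgroup of `PΣ_n` generated by the `α_{ij}` with `(i, j) ∈ S`. -/
def alphaSubgroup (S : Set (Fin n × Fin n)) : Subgroup (PSigmaAut n) :=
  Subgroup.closure ((fun p => alphaP n p.1 p.2) '' S)

lemma alphaP_mem_alphaSubgroup {S : Set (Fin n × Fin n)} {i j : Fin n} (h : (i, j) ∈ S) :
    alphaP n i j ∈ alphaSubgroup S :=
  Subgroup.subset_closure ⟨(i, j), h, rfl⟩

lemma exists_eq_conjGenerators (φ : PSigmaAut n) :
    ∃ w : Fin n → FG n, ∀ x, φ.1 x = conjGenerators w x := by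
  choose w hw using φ.2
  suffices (φ.1 : FG n ≃* FG n).toMonoidHom = conjGenerators w from
    ⟨w, DFunLike.congr_fun this⟩
  ext i
  simpa [conjGenerators_of] using hw i

lemma exists_mem_alphaSubgroup_univ_apply_of (i : Fin n) (s : Fin n × Bool) :
    ∃ ε ∈ alphaSubgroup Set.univ, ∀ r, ε.1 (of r) =
      if r = i then FreeGroup.mk [s] * of i * (FreeGroup.mk [s])⁻¹ else of r := by
  have hmem := alphaP_mem_alphaSubgroup (Set.mem_univ (i, s.1))
  obtain ⟨j, _ | _⟩ := s
  · refine ⟨(alphaP n i j)⁻¹, inv_mem hmem, fun r => ?_⟩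
    rw [← Bool.not_true, ← inv_mk_singleton (j, true), inv_inv]
    exact alphaP_inv_apply_of i j r
  · exact ⟨alphaP n i j, hmem, alphaP_apply_of i j⟩

lemma mul_apply_eq_conjGenerators_update {φ ε : PSigmaAut n} {w : Fin n → FG n} {i : Fin n}
    {g : FG n} (hφ : ∀ x, φ.1 x = conjGenerators w x)
    (hε : ∀ r, ε.1 (of r) = if r = i then g * of i * g⁻¹ else of r) (x : FG n) :
    (φ * ε).1 x = conjGenerators (Function.update w i (conjGenerators w g * w i)) x := by
  suffices ((φ * ε).1 : FG n ≃* FG n).toMonoidHom =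
    conjGenerators (Function.update w i (conjGenerators w g * w i)) from DFunLike.congr_fun this x
  ext r
  by_cases hr : r = i
  · subst hr
    simp [hε, hφ, conjGenerators_of, mul_assoc]
  · simp [hε, hφ, conjGenerators_of, hr]

theorem alphaSubgroup_univ : alphaSubgroup (n := n) Set.univ = ⊤ := by
  suffices ∀ (w : Fin n → FG n) (φ : PSigmaAut n), (∀ x, φ.1 x = conjGenerators w x) →
      φ ∈ alphaSubgroup Set.univ by
    refine eq_top_iff.2 fun φ _ => ?_
    obtain ⟨w, hw⟩ := exists_eq_conjGenerators φ
    exact this w φ hw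
  intro w
  induction hN : ∑ k, (w k).norm using Nat.strong_induction_on generalizing w with | _ N ih
  intro φ hφ
  by_cases hw : IsConjReduced w
  · have hsurj : Function.Surjective (conjGenerators w) := by
      intro y
      obtain ⟨x, hx⟩ := φ.1.surjective y
      exact ⟨x, (hφ x).symm.trans hx⟩
    obtain rfl := hw.eq_one_of_surjective hsurj
    have : φ = 1 := ext_of fun r => by simp [hφ, conjGenerators_of]
    exact this ▸ one_mem _
  · simp only [IsConjReduced, not_forall, not_le] at hw
    obtain ⟨i, s, hlt⟩ := hw
    obtain ⟨ε, hε, hεof⟩ := exists_mem_alphaSubgroup_univ_apply_of i s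
    refine (Subgroup.mul_mem_cancel_right _ hε).1
      (ih _ ?_ _ rfl (φ * ε) (mul_apply_eq_conjGenerators_update hφ hεof))
    subst hN
    exact sum_norm_update_lt (by rwa [conjGenerators_mk_singleton])

end Generation

section Normality

/-- The pairs of distinct indices containing `l`. They index the McCool generators of the kernel of
killing `x_l`. -/
def incidentPairs (l : Fin n) : Finset (Fin n × Fin n) :=
  {l} ×ˢ {l}ᶜ ∪ {l}ᶜ ×ˢ {l}

lemma card_incidentPairs (l : Fin n) : (incidentPairs l).card = 2 * n - 2 := by
  have hdisj : Disjoint (({l} : Finset (Fin n)) ×ˢ {l}ᶜ) ({l}ᶜ ×ˢ {l}) :=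
    Finset.disjoint_product.2 (Or.inl disjoint_compl_right)
  rw [incidentPairs, Finset.card_union_of_disjoint hdisj]
  simp only [Finset.card_product, Finset.card_compl, Finset.card_singleton, Fintype.card_fin]
  omega

lemma ne_of_mem_incidentPairs {l : Fin n} {p : Fin n × Fin n} (hp : p ∈ incidentPairs l) :
    p.1 ≠ p.2 := by
  simp only [incidentPairs, Finset.mem_union, Finset.mem_product, Finset.mem_singleton,
    Finset.mem_compl] at hp
  grind

lemma alphaP_mem_alphaSubgroup_right (i l : Fin n) :
    alphaP n i l ∈ alphaSubgroup (incidentPairs l) := by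
  rcases eq_or_ne i l with rfl | hil
  · exact alphaP_self i ▸ one_mem _
  · exact alphaP_mem_alphaSubgroup (by simp [incidentPairs, hil])

lemma alphaP_mem_alphaSubgroup_left (l i : Fin n) :
    alphaP n l i ∈ alphaSubgroup (incidentPairs l) := by
  rcases eq_or_ne i l with rfl | hil
  · exact alphaP_self i ▸ one_mem _
  · exact alphaP_mem_alphaSubgroup (by simp [incidentPairs, hil])

lemma conj_alphaP_mem_alphaSubgroup_left {k j l : Fin n} (hkl : k ≠ l) (hkj : k ≠ j)
    (hjl : j ≠ l) (i : Fin n) (z : ℤ) :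
    alphaP n k j ^ z * alphaP n l i * (alphaP n k j ^ z)⁻¹ ∈ alphaSubgroup (incidentPairs l) := by
  rcases eq_or_ne i k with rfl | hik
  · refine conj_mem_of_commute_mul (zpow_mem (alphaP_mem_alphaSubgroup_left l j) z)
      (alphaP_mem_alphaSubgroup_left l i) ?_
    rw [← (commute_alphaP hkl.symm hjl.symm hkj.symm).mul_zpow]
    exact (commute_alphaP_mul_alphaP hjl.symm i).zpow_left z
  · rw [((commute_alphaP hkl hik.symm hjl).zpow_left z).eq, mul_inv_cancel_right]
    exact alphaP_mem_alphaSubgroup_left l i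

lemma conj_alphaP_mem_alphaSubgroup_right {k j l : Fin n} (hkl : k ≠ l) (hkj : k ≠ j)
    (hjl : j ≠ l) (i : Fin n) (z : ℤ) :
    alphaP n k j ^ z * alphaP n i l * (alphaP n k j ^ z)⁻¹ ∈ alphaSubgroup (incidentPairs l) := by
  have hk : alphaP n k j ^ z * alphaP n k l * (alphaP n k j ^ z)⁻¹ ∈
      alphaSubgroup (incidentPairs l) := by
    refine conj_mem_of_commute_mul (zpow_mem (alphaP_mem_alphaSubgroup_left l j) z)
      (alphaP_mem_alphaSubgroup_right k l) ?_
    have hcomm := commute_alphaP hkl hkj hjl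
    rw [← hcomm.symm.mul_zpow, ← hcomm.eq]
    exact (commute_alphaP_mul_alphaP hkj l).zpow_left z
  rcases eq_or_ne i k with rfl | hik
  · exact hk
  rcases eq_or_ne i j with rfl | hij
  · have hkil : alphaP n k i ^ z * (alphaP n k l * alphaP n i l) * (alphaP n k i ^ z)⁻¹ =
        alphaP n k l * alphaP n i l := by
      rw [((commute_alphaP_mul_alphaP hkl i).symm.zpow_left z).eq, mul_inv_cancel_right]
    refine (Subgroup.mul_mem_cancel_left _ hk).1 ?_
    rw [conj_mul, hkil]
    exact mul_mem (alphaP_mem_alphaSubgroup_right k l) (alphaP_mem_alphaSubgroup_right i l)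
  · rw [((commute_alphaP hik.symm hkl hij.symm).zpow_left z).eq, mul_inv_cancel_right]
    exact alphaP_mem_alphaSubgroup_right i l

theorem normal_alphaSubgroup_incidentPairs (l : Fin n) :
    (alphaSubgroup (n := n) (incidentPairs l)).Normal := by
  rw [← Subgroup.normalizer_eq_top_iff, eq_top_iff, ← alphaSubgroup_univ, alphaSubgroup,
    Subgroup.closure_le]
  rintro _ ⟨⟨k, j⟩, -, rfl⟩
  rcases eq_or_ne k l with rfl | hkl
  · exact Subgroup.le_normalizer (alphaP_mem_alphaSubgroup_left k j)
  rcases eq_or_ne j l with rfl | hjl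
  · exact Subgroup.le_normalizer (alphaP_mem_alphaSubgroup_right k j)
  rcases eq_or_ne k j with rfl | hkj
  · simp [alphaP_self, one_mem]
  refine Subgroup.le_normalizer_closure_iff.2 ?_ (Subgroup.mem_zpowers (alphaP n k j))
  rintro _ ⟨z, rfl⟩ _ ⟨⟨i, i'⟩, hp, rfl⟩
  simp only [incidentPairs, Finset.coe_union, Finset.coe_product, Set.mem_union, Set.mem_prod,
    Finset.mem_coe, Finset.mem_singleton] at hp
  rcases hp with ⟨rfl, -⟩ | ⟨-, rfl⟩
  · exact conj_alphaP_mem_alphaSubgroup_left hkl hkj hjl i' z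
  · exact conj_alphaP_mem_alphaSubgroup_right hkl hkj hjl i z

end Normality

section Kernel

lemma mem_Kn_iff {φ : PSigmaAut n} :
    φ ∈ Kn n ↔ ∀ x, projHom n (φ.1 x) = projHom n x := by
  have hdesc : φ ∈ Kn n ↔ desc n φ.1 = MonoidHom.id _ := by
    rw [Kn, MonoidHom.mem_ker, Subtype.ext_iff, MulEquiv.ext_iff, DFunLike.ext_iff]
    rfl
  rw [hdesc]
  constructor
  · intro h x
    rw [← desc_proj φ.2, h, MonoidHom.id_apply]
  · intro h
    rw [← desc_one]
    ext y
    exact h _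

variable {m : ℕ}

/-- The retraction of `F_{m+1}` onto its free factor `F_m` that kills the last generator. -/
def retraction (m : ℕ) : FG (m + 1) →* FG (m + 1) :=
  (castHom (m + 1)).comp (projHom (m + 1))

lemma projHom_of_last : projHom (m + 1) (of (Fin.last m)) = 1 := by
  simp [projHom]

lemma retraction_of_last : retraction m (of (Fin.last m)) = 1 := by
  rw [retraction, MonoidHom.comp_apply, projHom_of_last, _root_.map_one]

lemma retraction_of_ne {i : Fin (m + 1)} (hi : i ≠ Fin.last m) : retraction m (of i) = of i := by
  have hlt : (i : ℕ) < m := Fin.val_lt_last hi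
  simp [retraction, projHom, castHom, hlt]

lemma alphaP_mem_Kn {p : Fin (m + 1) × Fin (m + 1)} (hp : p ∈ incidentPairs (Fin.last m)) :
    alphaP (m + 1) p.1 p.2 ∈ Kn (m + 1) := by
  rw [mem_Kn_iff]
  suffices (projHom (m + 1)).comp (alphaP (m + 1) p.1 p.2).1.toMonoidHom = projHom (m + 1) from
    DFunLike.congr_fun this
  ext r
  rw [MonoidHom.comp_apply, MulEquiv.toMonoidHom_eq_coe, MonoidHom.coe_coe, alphaP_apply_of]
  split_ifs with hr
  · have : p.1 = Fin.last m ∨ p.2 = Fin.last m := by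
      simp only [incidentPairs, Finset.mem_union, Finset.mem_product, Finset.mem_singleton] at hp
      tauto
    subst hr
    rcases this with h | h <;>
      simp only [_root_.map_mul, _root_.map_inv, h, projHom_of_last] <;> group
  · rfl

lemma apply_last_and_retraction_apply_of_mem {φ : PSigmaAut (m + 1)}
    (hφ : φ ∈ alphaSubgroup ({Fin.last m}ᶜ ×ˢ {Fin.last m}ᶜ)) :
    φ.1 (of (Fin.last m)) = of (Fin.last m) ∧
      ∀ x, retraction m (φ.1 x) = φ.1 (retraction m x) := by
  induction hφ using Subgroup.closure_induction with
  | mem _ h =>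
    obtain ⟨⟨i, j⟩, ⟨hi, hj⟩, rfl⟩ := h
    simp only [Set.mem_compl_iff, Set.mem_singleton_iff] at hi hj
    refine ⟨by simp [alphaP_apply_of, Ne.symm hi], fun x => ?_⟩
    suffices (retraction m).comp (alphaP (m + 1) i j).1.toMonoidHom =
      (alphaP (m + 1) i j).1.toMonoidHom.comp (retraction m) from DFunLike.congr_fun this x
    ext r
    rcases eq_or_ne r (Fin.last m) with rfl | hr
    · simp [alphaP_apply_of, retraction_of_last, Ne.symm hi]
    · rcases eq_or_ne r i with rfl | hri <;>
        simp [alphaP_apply_of, retraction_of_ne, *]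
  | one => simp
  | mul φ ψ _ _ hφ hψ => simp [hφ.1, hψ.1, hφ.2, hψ.2]
  | inv φ _ hφ =>
    refine ⟨φ.1.injective (by simp [hφ.1]), fun x => φ.1.injective ?_⟩
    rw [← hφ.2]
    simp

lemma disjoint_Kn_alphaSubgroup_compl :
    Disjoint (Kn (m + 1)) (alphaSubgroup ({Fin.last m}ᶜ ×ˢ {Fin.last m}ᶜ)) := by
  refine Subgroup.disjoint_def.2 fun {φ} hK hφ => ?_
  obtain ⟨hlast, hcomm⟩ := apply_last_and_retraction_apply_of_mem hφ
  refine ext_of fun i => ?_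
  rcases eq_or_ne i (Fin.last m) with rfl | hi
  · exact hlast
  · calc φ.1 (of i) = retraction m (φ.1 (of i)) := by rw [hcomm, retraction_of_ne hi]
      _ = retraction m (of i) := congrArg (castHom (m + 1)) (mem_Kn_iff.1 hK (of i))
      _ = of i := retraction_of_ne hi

lemma alphaSubgroup_sup_alphaSubgroup_compl (l : Fin n) :
    alphaSubgroup (incidentPairs l) ⊔ alphaSubgroup ({l}ᶜ ×ˢ {l}ᶜ) = ⊤ := by
  rw [eq_top_iff, ← alphaSubgroup_univ, alphaSubgroup, Subgroup.closure_le]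
  rintro _ ⟨⟨i, j⟩, -, rfl⟩
  rcases eq_or_ne i l with rfl | hi
  · exact Subgroup.mem_sup_left (alphaP_mem_alphaSubgroup_left i j)
  rcases eq_or_ne j l with rfl | hj
  · exact Subgroup.mem_sup_left (alphaP_mem_alphaSubgroup_right i j)
  · exact Subgroup.mem_sup_right (alphaP_mem_alphaSubgroup ⟨hi, hj⟩)

theorem Kn_eq_alphaSubgroup : Kn (m + 1) = alphaSubgroup (incidentPairs (Fin.last m)) := by
  have hle : alphaSubgroup (incidentPairs (Fin.last m)) ≤ Kn (m + 1) := by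
    rw [alphaSubgroup, Subgroup.closure_le]
    rintro _ ⟨p, hp, rfl⟩
    exact alphaP_mem_Kn hp
  refine le_antisymm (fun φ hφ => ?_) hle
  have := normal_alphaSubgroup_incidentPairs (Fin.last m)
  obtain ⟨ψ, hψ, σ, hσ, rfl⟩ := Subgroup.mem_sup_of_normal_left.1
    (alphaSubgroup_sup_alphaSubgroup_compl (Fin.last m) ▸ Subgroup.mem_top φ)
  have hσK : σ ∈ Kn (m + 1) := (Subgroup.mul_mem_cancel_left _ (hle hψ)).1 hφ
  rw [Subgroup.disjoint_def.1 disjoint_Kn_alphaSubgroup_compl hσK hσ, mul_one]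
  exact hψ

end Kernel

section ConjugatorHom

variable {A : Type*} [CommGroup A]

lemma map_apply_eq (φ : PSigmaAut n) (f : FG n →* A) (u : FG n) : f (φ.1 u) = f u := by
  suffices f.comp φ.1.toMonoidHom = f from DFunLike.congr_fun this u
  ext i
  obtain ⟨w, hw⟩ := φ.2 i
  simp [hw]

lemma map_conjugator_mul {φ ψ : PSigmaAut n} {f : FG n →* A} {i : Fin n} (hf : f (of i) = 1)
    {u v w : FG n} (hu : φ.1 (of i) = u * of i * u⁻¹) (hv : ψ.1 (of i) = v * of i * v⁻¹)
    (hw : (φ * ψ).1 (of i) = w * of i * w⁻¹) : f w = f u * f v := by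
  have h : w * of i * w⁻¹ = (φ.1 v * u) * of i * (φ.1 v * u)⁻¹ := by
    rw [← hw, Subgroup.coe_mul, MulAut.mul_apply, hv]
    simp only [_root_.map_mul, _root_.map_inv, hu]
    group
  rw [map_eq_map_of_conj_of_eq f hf h, _root_.map_mul, map_apply_eq, mul_comm]

/-- The homomorphism `φ ↦ f w`, where `φ x_i = w x_i w⁻¹`. The choice of `w` is immaterial because
`f x_i = 1`. -/
noncomputable def conjugatorHom (i : Fin n) (f : FG n →* A) (hf : f (of i) = 1) :
    PSigmaAut n →* A :=
  MonoidHom.mk' (fun φ => f (φ.2 i).choose) fun φ ψ =>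
    map_conjugator_mul hf (φ.2 i).choose_spec (ψ.2 i).choose_spec ((φ * ψ).2 i).choose_spec

lemma conjugatorHom_apply {i : Fin n} {f : FG n →* A} (hf : f (of i) = 1) {φ : PSigmaAut n}
    {w : FG n} (hw : φ.1 (of i) = w * of i * w⁻¹) : conjugatorHom i f hf φ = f w :=
  map_eq_map_of_conj_of_eq f hf ((φ.2 i).choose_spec.symm.trans hw)

lemma conjugatorHom_alphaP {i : Fin n} {f : FG n →* A} (hf : f (of i) = 1) (k l : Fin n) :
    conjugatorHom i f hf (alphaP n k l) = if i = k then f (of l) else 1 := by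
  split_ifs with hik
  · exact conjugatorHom_apply hf (by rw [alphaP_apply_of, if_pos hik, hik])
  · rw [conjugatorHom_apply hf (w := 1) (by simp [alphaP_apply_of, hik]), _root_.map_one]

theorem nonempty_basis_abelianization_alphaSubgroup {S : Set (Fin n × Fin n)}
    (hS : ∀ p ∈ S, p.1 ≠ p.2) :
    Nonempty (Module.Basis S ℤ (Additive (Abelianization (alphaSubgroup S)))) := by
  rw [alphaSubgroup, Set.image_eq_range]
  refine nonempty_basis_abelianization_closure_range
    (fun p : S => conjugatorHom p.1.1 (exponentSum p.1.2) (by simp [exponentSum, (hS p p.2).symm]))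
    fun p q => ?_
  rw [conjugatorHom_alphaP, exponentSum, FreeGroup.lift_apply_of, ← ite_and]
  simp only [Subtype.ext_iff, Prod.ext_iff]

end ConjugatorHom

end PSigmaAut

/-- STATEMENT 4: For every `n ≥ 2`, `H_1(K_n; ℤ) ≃ ℤ^{2n-2}`; equivalently, the
abelianization of `K_n` is a free abelian group of rank `2n - 2`. -/
theorem statement4 (n : ℕ) (hn : 2 ≤ n) :
    Nonempty (Additive (Abelianization ↥(Kn n)) ≃+ (Fin (2 * n - 2) → ℤ)) := by
  obtain ⟨m, rfl⟩ : ∃ m, n = m + 1 := ⟨n - 1, by omega⟩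
  rw [PSigmaAut.Kn_eq_alphaSubgroup]
  have hne : ∀ p ∈ (PSigmaAut.incidentPairs (Fin.last m) : Set (Fin (m + 1) × Fin (m + 1))),
      p.1 ≠ p.2 := fun _ => PSigmaAut.ne_of_mem_incidentPairs
  obtain ⟨b⟩ := PSigmaAut.nonempty_basis_abelianization_alphaSubgroup hne
  exact ⟨(b.reindex (Finset.equivFinOfCardEq
    (PSigmaAut.card_incidentPairs (Fin.last m)))).equivFun.toAddEquiv⟩
end

section
/- For every n ≥ 3 there exist group homomorphisms ι : K_{n−1} → K_n and p : K_n → K_{n−1} with p ∘ ι = id; that is, K_n admits a split homomorphism onto K_{n−1}. -/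
open FreeGroup

/-!
An injection `e : Fin m ↪ Fin n` of index sets induces two homomorphisms between pure symmetric
automorphism groups: `forgetHom e : PΣ_n → PΣ_m` kills the generators outside the range of `e`, and
`extendHom e : PΣ_m → PΣ_n` lets an automorphism act on the generators in the range of `e` and fix
the others. Forgetting is functorial, extending followed by forgetting is the identity, and the
two satisfy a base change formula for pullback squares of injections.

Since `π_n` forgets the *last* generator, `K_{n-1}` and `K_n` can be compared through the *first*
one: the successor maps and the inclusions of initial segments form a pullback square, so
forgetting and adding the first generator commute with `π` and hence restrict to the kernels.
-/

section KernelSplitting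

variable {G G' H H' : Type*} [Group G] [Group G'] [MulOneClass H] [MulOneClass H']

/-- The homomorphism between the kernels of the vertical maps `π`, `π'` of a commutative square
with horizontal maps `f` and `g`. -/
def kerMap {π : G →* H} {π' : G' →* H'} {f : G →* G'} {g : H →* H'}
    (h : π'.comp f = g.comp π) : π.ker →* π'.ker :=
  (f.comp π.ker.subtype).codRestrict π'.ker fun x => by
    have hx : π x = 1 := x.2
    simpa [hx] using DFunLike.congr_fun h (x : G)

lemma kerMap_comp_kerMap_eq_id {π : G →* H} {π' : G' →* H'} {s : G →* G'} {r : G' →* G}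
    {s' : H →* H'} {r' : H' →* H} (hs : π'.comp s = s'.comp π) (hr : π.comp r = r'.comp π')
    (hrs : r.comp s = MonoidHom.id G) :
    (kerMap hr).comp (kerMap hs) = MonoidHom.id π.ker := by
  ext x
  exact DFunLike.congr_fun hrs (x : G)

/-- An action of a group by endomorphisms, viewed as an action by automorphisms. -/
def mulAutHomOfEnd (f : G →* Monoid.End H) : G →* MulAut H where
  toFun g := MonoidHom.toMulEquiv (f g) (f g⁻¹)
    (by
      have h : f g⁻¹ * f g = 1 := by
        rw [← _root_.map_mul, inv_mul_cancel, _root_.map_one]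
      exact h)
    (by
      have h : f g * f g⁻¹ = 1 := by
        rw [← _root_.map_mul, mul_inv_cancel, _root_.map_one]
      exact h)
  map_one' := MulEquiv.ext fun x => DFunLike.congr_fun (_root_.map_one f) x
  map_mul' g g' := MulEquiv.ext fun x => DFunLike.congr_fun (_root_.map_mul f g g') x

end KernelSplitting

section FreeGroupEmbedding

variable {α β γ δ : Type*}

lemma freeGroup_hom_ext_of_embedding {M : Type*} [Monoid M] (e : α ↪ β) {φ ψ : FreeGroup β →* M}
    (h_range : ∀ a, φ (of (e a)) = ψ (of (e a)))
    (h_compl : ∀ b ∉ Set.range e, φ (of b) = ψ (of b)) : φ = ψ := by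
  refine FreeGroup.ext_hom _ _ fun b => ?_
  by_cases hb : b ∈ Set.range e
  · obtain ⟨a, rfl⟩ := hb
    exact h_range a
  · exact h_compl b hb

/-- The retraction of `FreeGroup.map e` killing the generators outside the range of `e`. -/
noncomputable def retract (e : α ↪ β) : FreeGroup β →* FreeGroup α :=
  FreeGroup.lift (Function.extend e of 1)

@[simp]
lemma retract_of_apply (e : α ↪ β) (a : α) : retract e (of (e a)) = of a := by
  simp [retract, e.injective.extend_apply]

lemma retract_of_notMem_range {e : α ↪ β} {b : β} (hb : b ∉ Set.range e) :
    retract e (of b) = 1 := by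
  simp [retract, Function.extend_apply' _ _ _ hb]

@[simp]
lemma retract_map (e : α ↪ β) (x : FreeGroup α) : retract e (FreeGroup.map e x) = x := by
  have h : (retract e).comp (FreeGroup.map e) = MonoidHom.id _ :=
    FreeGroup.ext_hom _ _ fun a => by simp
  exact DFunLike.congr_fun h x

lemma retract_comp_retract (f : α ↪ β) (g : β ↪ γ) :
    (retract f).comp (retract g) = retract (f.trans g) := by
  refine freeGroup_hom_ext_of_embedding (f.trans g) (fun a => ?_) fun c hc => ?_
  · rw [retract_of_apply, Function.Embedding.trans_apply, MonoidHom.comp_apply, retract_of_apply,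
      retract_of_apply]
  · rw [retract_of_notMem_range hc, MonoidHom.comp_apply]
    by_cases hcg : c ∈ Set.range g
    · obtain ⟨b, rfl⟩ := hcg
      have hb : b ∉ Set.range f := by simpa using hc
      rw [retract_of_apply, retract_of_notMem_range hb]
    · rw [retract_of_notMem_range hcg, _root_.map_one]

/-- The extension of an endomorphism along `e`, fixing the generators outside the range of `e`. -/
noncomputable def extendEnd (e : α ↪ β) (ψ : FreeGroup α →* FreeGroup α) :
    FreeGroup β →* FreeGroup β :=
  FreeGroup.lift (Function.extend e (fun a => FreeGroup.map e (ψ (of a))) of)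

@[simp]
lemma extendEnd_of_apply (e : α ↪ β) (ψ : FreeGroup α →* FreeGroup α) (a : α) :
    extendEnd e ψ (of (e a)) = FreeGroup.map e (ψ (of a)) := by
  simp [extendEnd, e.injective.extend_apply]

lemma extendEnd_of_notMem_range {e : α ↪ β} (ψ : FreeGroup α →* FreeGroup α) {b : β}
    (hb : b ∉ Set.range e) : extendEnd e ψ (of b) = of b := by
  simp [extendEnd, Function.extend_apply' _ _ _ hb]

@[simp]
lemma extendEnd_map (e : α ↪ β) (ψ : FreeGroup α →* FreeGroup α) (x : FreeGroup α) :
    extendEnd e ψ (FreeGroup.map e x) = FreeGroup.map e (ψ x) := by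
  have h : (extendEnd e ψ).comp (FreeGroup.map e) = (FreeGroup.map e).comp ψ :=
    FreeGroup.ext_hom _ _ fun a => by simp
  exact DFunLike.congr_fun h x

lemma extendEnd_id (e : α ↪ β) :
    extendEnd e (MonoidHom.id (FreeGroup α)) = MonoidHom.id (FreeGroup β) :=
  freeGroup_hom_ext_of_embedding e (fun a => by simp)
    fun b hb => by simp [extendEnd_of_notMem_range _ hb]

lemma extendEnd_comp (e : α ↪ β) (φ ψ : FreeGroup α →* FreeGroup α) :
    extendEnd e (φ.comp ψ) = (extendEnd e φ).comp (extendEnd e ψ) :=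
  freeGroup_hom_ext_of_embedding e (fun a => by simp)
    fun b hb => by simp [extendEnd_of_notMem_range _ hb]

/-- The square `f ∘ i = g ∘ j` is a pullback of sets: it commutes, and every coincidence
`f a = g b` comes from its corner `δ`. -/
def IsPullbackSquare (i : δ ↪ α) (j : δ ↪ β) (f : α ↪ γ) (g : β ↪ γ) : Prop :=
  ∀ a b, f a = g b ↔ ∃ d, i d = a ∧ j d = b

namespace IsPullbackSquare

variable {i : δ ↪ α} {j : δ ↪ β} {f : α ↪ γ} {g : β ↪ γ}

lemma apply_eq (h : IsPullbackSquare i j f g) (d : δ) : f (i d) = g (j d) :=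
  (h _ _).2 ⟨d, rfl, rfl⟩

lemma trans_eq (h : IsPullbackSquare i j f g) : i.trans f = j.trans g :=
  Function.Embedding.ext h.apply_eq

lemma left_notMem_range (h : IsPullbackSquare i j f g) {a : α} (ha : a ∉ Set.range i) :
    f a ∉ Set.range g := by
  rintro ⟨b, hb⟩
  obtain ⟨d, hd, -⟩ := (h a b).1 hb.symm
  exact ha ⟨d, hd⟩

lemma right_notMem_range (h : IsPullbackSquare i j f g) {b : β} (hb : b ∉ Set.range j) :
    g b ∉ Set.range f := by
  rintro ⟨a, ha⟩
  obtain ⟨d, -, hd⟩ := (h a b).1 ha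
  exact hb ⟨d, hd⟩

lemma retract_comp_map (h : IsPullbackSquare i j f g) :
    (retract g).comp (FreeGroup.map f) = (FreeGroup.map j).comp (retract i) :=
  freeGroup_hom_ext_of_embedding i (fun d => by simp [h.apply_eq]) fun a ha => by
    simp [retract_of_notMem_range ha, retract_of_notMem_range (h.left_notMem_range ha)]

lemma retract_comp_extendEnd_comp_map (h : IsPullbackSquare i j f g)
    (ψ : FreeGroup α →* FreeGroup α) :
    (retract g).comp ((extendEnd f ψ).comp (FreeGroup.map g)) =
      extendEnd j ((retract i).comp (ψ.comp (FreeGroup.map i))) := by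
  refine freeGroup_hom_ext_of_embedding j (fun d => ?_) fun b hb => ?_
  · simpa [← h.apply_eq] using DFunLike.congr_fun h.retract_comp_map (ψ (of (i d)))
  · simp [extendEnd_of_notMem_range _ hb, extendEnd_of_notMem_range _ (h.right_notMem_range hb)]

end IsPullbackSquare

end FreeGroupEmbedding

section PureSymmetric

variable {k l m n : ℕ}

lemma retract_apply_map_retract (e : Fin m ↪ Fin n) (φ : PSigmaAut n) (x : FG n) :
    retract e (φ.1 (FreeGroup.map e (retract e x))) = retract e (φ.1 x) := by
  have h : (retract e).comp (φ.1.toMonoidHom.comp ((FreeGroup.map e).comp (retract e))) =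
      (retract e).comp φ.1.toMonoidHom := by
    refine freeGroup_hom_ext_of_embedding e (fun a => by simp) fun b hb => ?_
    obtain ⟨w, hw⟩ := φ.2 b
    simp [hw, retract_of_notMem_range hb]
  exact DFunLike.congr_fun h x

/-- The action of `PΣ_n` on `F_m` obtained by killing the generators outside the range of `e`. -/
noncomputable def forgetAction (e : Fin m ↪ Fin n) : PSigmaAut n →* Monoid.End (FG m) where
  toFun φ := (retract e).comp (φ.1.toMonoidHom.comp (FreeGroup.map e))
  map_one' := MonoidHom.ext fun x => retract_map e x
  map_mul' φ ψ := MonoidHom.ext fun x =>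
    (retract_apply_map_retract e φ (ψ.1 (FreeGroup.map e x))).symm

/-- The homomorphism `PΣ_n → PΣ_m` induced by killing the generators outside the range of `e`. -/
noncomputable def forgetHom (e : Fin m ↪ Fin n) : PSigmaAut n →* PSigmaAut m :=
  (mulAutHomOfEnd (forgetAction e)).codRestrict (PSigmaAut m) fun φ a => by
    obtain ⟨w, hw⟩ := φ.2 (e a)
    refine ⟨retract e w, ?_⟩
    change retract e (φ.1 (FreeGroup.map e (of a))) = _
    simp [hw]

lemma forgetHom_apply (e : Fin m ↪ Fin n) (φ : PSigmaAut n) (x : FG m) :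
    (forgetHom e φ).1 x = retract e (φ.1 (FreeGroup.map e x)) := rfl

/-- The action of `PΣ_m` on `F_n` obtained by fixing the generators outside the range of `e`. -/
noncomputable def extendAction (e : Fin m ↪ Fin n) : PSigmaAut m →* Monoid.End (FG n) where
  toFun ψ := extendEnd e ψ.1.toMonoidHom
  map_one' := extendEnd_id e
  map_mul' φ ψ := extendEnd_comp e φ.1.toMonoidHom ψ.1.toMonoidHom

/-- The homomorphism `PΣ_m → PΣ_n` extending an automorphism along `e` by fixing the generators
outside the range of `e`. -/
noncomputable def extendHom (e : Fin m ↪ Fin n) : PSigmaAut m →* PSigmaAut n :=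
  (mulAutHomOfEnd (extendAction e)).codRestrict (PSigmaAut n) fun ψ b => by
    change ∃ w, extendEnd e ψ.1.toMonoidHom (of b) = _
    by_cases hb : b ∈ Set.range e
    · obtain ⟨a, rfl⟩ := hb
      obtain ⟨w, hw⟩ := ψ.2 a
      exact ⟨FreeGroup.map e w, by simp [hw]⟩
    · exact ⟨1, by simp [extendEnd_of_notMem_range _ hb]⟩

lemma extendHom_apply (e : Fin m ↪ Fin n) (ψ : PSigmaAut m) (x : FG n) :
    (extendHom e ψ).1 x = extendEnd e ψ.1.toMonoidHom x := rfl

lemma forgetHom_comp_forgetHom (f : Fin l ↪ Fin m) (g : Fin m ↪ Fin n) :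
    (forgetHom f).comp (forgetHom g) = forgetHom (f.trans g) := by
  ext φ x
  simp [forgetHom_apply, ← retract_comp_retract, FreeGroup.map.comp, Function.Embedding.coe_trans]

lemma forgetHom_comp_extendHom_self (e : Fin m ↪ Fin n) :
    (forgetHom e).comp (extendHom e) = MonoidHom.id (PSigmaAut m) := by
  ext ψ x
  simp [forgetHom_apply, extendHom_apply]

namespace IsPullbackSquare

variable {i : Fin k ↪ Fin l} {j : Fin k ↪ Fin m} {f : Fin l ↪ Fin n} {g : Fin m ↪ Fin n}

lemma forgetHom_comp_forgetHom (h : IsPullbackSquare i j f g) :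
    (forgetHom i).comp (forgetHom f) = (forgetHom j).comp (forgetHom g) := by
  rw [_root_.forgetHom_comp_forgetHom, _root_.forgetHom_comp_forgetHom, h.trans_eq]

lemma forgetHom_comp_extendHom (h : IsPullbackSquare i j f g) :
    (forgetHom g).comp (extendHom f) = (extendHom j).comp (forgetHom i) :=
  MonoidHom.ext fun ψ => Subtype.ext <| MulEquiv.ext fun x =>
    DFunLike.congr_fun (h.retract_comp_extendEnd_comp_map ψ.1.toMonoidHom) x

end IsPullbackSquare

lemma isPullbackSquare_castSucc_succ (n : ℕ) :
    IsPullbackSquare Fin.castSuccEmb (Fin.succEmb n) (Fin.succEmb (n + 1)) Fin.castSuccEmb := by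
  intro a b
  constructor
  · intro hab
    have hval : (a : ℕ) + 1 = b := congrArg Fin.val hab
    exact ⟨⟨a, by lia⟩, rfl, Fin.ext hval⟩
  · rintro ⟨d, rfl, rfl⟩
    rfl

lemma projHom_succ (n : ℕ) : projHom (n + 1) = retract (Fin.castSuccEmb (n := n)) := by
  refine freeGroup_hom_ext_of_embedding Fin.castSuccEmb (fun i => ?_) fun i hi => ?_
  · rw [retract_of_apply]
    simp [projHom]
  · have hle : ¬ (i : ℕ) < n := by simpa using hi
    rw [retract_of_notMem_range hi]
    simp [projHom, hle]

lemma castHom_succ (n : ℕ) : castHom (n + 1) = FreeGroup.map (Fin.castSuccEmb (n := n)) :=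
  FreeGroup.map_eq_lift.symm

lemma piHom_succ (n : ℕ) : piHom (n + 1) = forgetHom (Fin.castSuccEmb (n := n)) := by
  refine MonoidHom.ext fun φ => Subtype.ext <| MulEquiv.ext fun x => ?_
  change projHom (n + 1) (φ.1 (castHom (n + 1) x)) = _
  rw [projHom_succ, castHom_succ, forgetHom_apply]

lemma piHom_comp_extendHom_succ (n : ℕ) :
    (piHom (n + 2)).comp (extendHom (Fin.succEmb (n + 1))) =
      (extendHom (Fin.succEmb n)).comp (piHom (n + 1)) := by
  rw [piHom_succ, piHom_succ]
  exact (isPullbackSquare_castSucc_succ n).forgetHom_comp_extendHom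

lemma piHom_comp_forgetHom_succ (n : ℕ) :
    (piHom (n + 1)).comp (forgetHom (Fin.succEmb (n + 1))) =
      (forgetHom (Fin.succEmb n)).comp (piHom (n + 2)) := by
  rw [piHom_succ, piHom_succ]
  exact (isPullbackSquare_castSucc_succ n).forgetHom_comp_forgetHom

end PureSymmetric

/-- STATEMENT 12: For every `n ≥ 3` there are group homomorphisms `ι : K_{n-1} → K_n` and
`p : K_n → K_{n-1}` with `p ∘ ι = id`; that is, `K_n` admits a split homomorphism onto
`K_{n-1}`. -/
theorem statement12 (n : ℕ) (hn : 3 ≤ n) :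
    ∃ (ι : ↥(Kn (n - 1)) →* ↥(Kn n)) (p : ↥(Kn n) →* ↥(Kn (n - 1))),
      p.comp ι = MonoidHom.id _ := by
  obtain ⟨k, rfl⟩ : ∃ k, n = k + 2 := ⟨n - 2, by lia⟩
  exact ⟨kerMap (piHom_comp_extendHom_succ k), kerMap (piHom_comp_forgetHom_succ k),
    kerMap_comp_kerMap_eq_id _ _ (forgetHom_comp_extendHom_self (Fin.succEmb (k + 1)))⟩
end
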